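/- arXiv:2204.01926 — 10 statements merged into one kernel-verified Lean document; each statement's English description precedes it below -/
import Mathlib

section
/- Let q : ℕ → ℚ ∩ [0,1] be a bijection, let g : [0,1] → ℝ be given by g(x) = Σ_{n : q(n) ≤ x} 2^{−n}, and let G(x) = ∫₀ˣ g(t) dt. Then G is convex on [0,1], and at every irrational point x ∈ (0,1) the function G is differentiable with derivative G'(x) = g(x). -/
/-!
The function `g` is monotone, so its mean over an interval lies between its values at the two
endpoints; hence `g y` separates the slopes of `G` to the left and to the right of `y`, and `G` is
convex. Away from the points `q n` every step `1_{q n ≤ x}` is locally constant, so by dominated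
convergence `g` is continuous there, and the fundamental theorem of calculus gives `G' = g`.
-/

open Set Filter Topology

section MonotoneIntegrand

variable {g : ℝ → ℝ} {a x y : ℝ}

lemma integral_le_sub_mul_of_monotoneOn (hxy : x ≤ y) (hg : MonotoneOn g (Icc x y)) :
    ∫ t in x..y, g t ≤ (y - x) * g y := by
  rw [← uIcc_of_le hxy] at hg
  calc ∫ t in x..y, g t ≤ ∫ _ in x..y, g y :=
        intervalIntegral.integral_mono_on hxy hg.intervalIntegrable intervalIntegrable_const
          fun t ht => hg (uIcc_of_le hxy ▸ ht) right_mem_uIcc ht.2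
    _ = (y - x) * g y := by rw [intervalIntegral.integral_const, smul_eq_mul]

lemma sub_mul_le_integral_of_monotoneOn (hxy : x ≤ y) (hg : MonotoneOn g (Icc x y)) :
    (y - x) * g x ≤ ∫ t in x..y, g t := by
  rw [← uIcc_of_le hxy] at hg
  calc (y - x) * g x = ∫ _ in x..y, g x := by rw [intervalIntegral.integral_const, smul_eq_mul]
    _ ≤ ∫ t in x..y, g t :=
        intervalIntegral.integral_mono_on hxy intervalIntegrable_const hg.intervalIntegrable
          fun t ht => hg left_mem_uIcc (uIcc_of_le hxy ▸ ht) ht.1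

lemma convexOn_integral_of_monotoneOn {s : Set ℝ} (hs : Convex ℝ s) (hg : MonotoneOn g s)
    (ha : a ∈ s) : ConvexOn ℝ s fun x => ∫ t in a..x, g t := by
  refine convexOn_of_slope_mono_adjacent hs fun {x y z} hx hz hxy hyz => ?_
  have hy : y ∈ s := hs.ordConnected.out hx hz ⟨hxy.le, hyz.le⟩
  have hint {u : ℝ} (hu : u ∈ s) : IntervalIntegrable g MeasureTheory.volume a u :=
    (hg.mono (hs.ordConnected.uIcc_subset ha hu)).intervalIntegrable
  rw [intervalIntegral.integral_interval_sub_left (hint hy) (hint hx),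
    intervalIntegral.integral_interval_sub_left (hint hz) (hint hy)]
  calc (∫ t in x..y, g t) / (y - x) ≤ g y :=
        (div_le_iff₀' (sub_pos.2 hxy)).2 <|
          integral_le_sub_mul_of_monotoneOn hxy.le (hg.mono (hs.ordConnected.out hx hy))
    _ ≤ (∫ t in y..z, g t) / (z - y) :=
        (le_div_iff₀' (sub_pos.2 hyz)).2 <|
          sub_mul_le_integral_of_monotoneOn hyz.le (hg.mono (hs.ordConnected.out hy hz))

lemma hasDerivAt_integral_of_monotone (hg : Monotone g) (hx : ContinuousAt g x) :
    HasDerivAt (fun u => ∫ t in a..u, g t) (g x) x :=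
  intervalIntegral.integral_hasDerivAt_right hg.intervalIntegrable
    hg.measurable.stronglyMeasurable.stronglyMeasurableAtFilter hx

end MonotoneIntegrand

lemma eventually_le_iff_of_ne {α : Type*} [LinearOrder α] [TopologicalSpace α]
    [OrderClosedTopology α] {a x : α} (h : a ≠ x) : ∀ᶠ y in 𝓝 x, a ≤ y ↔ a ≤ x := by
  rcases h.lt_or_gt with hax | hxa
  · filter_upwards [eventually_gt_nhds hax] with y hay
    exact iff_of_true hay.le hax.le
  · filter_upwards [eventually_lt_nhds hxa] with y hya
    exact iff_of_false hya.not_ge hxa.not_ge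

/-- The pure jump function with jump `w i` at the point `q i`: its value at `x` is the sum of the
weights `w i` over all `i` with `q i ≤ x`. Jumps at coinciding points add up. -/
noncomputable def jumpSum {ι α M : Type*} [LE α] [AddCommMonoid M] [TopologicalSpace M]
    (q : ι → α) (w : ι → M) (x : α) : M :=
  ∑' i, {i | q i ≤ x}.indicator w i

namespace jumpSum

variable {ι α : Type*} {q : ι → α}

lemma eq_tsum_ite {M : Type*} [LE α] [DecidableLE α] [AddCommMonoid M] [TopologicalSpace M]
    (q : ι → α) (w : ι → M) (x : α) : jumpSum q w x = ∑' i, if q i ≤ x then w i else 0 :=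
  tsum_congr fun i => indicator_apply {i | q i ≤ x} w i

lemma monotone [Preorder α] {M : Type*} [AddCommGroup M] [PartialOrder M] [IsOrderedAddMonoid M]
    [UniformSpace M] [IsUniformAddGroup M] [CompleteSpace M] [OrderClosedTopology M] {w : ι → M}
    (hw : Summable w) (hw_nonneg : 0 ≤ w) : Monotone (jumpSum q w) := fun _ _ hxy =>
  (hw.indicator _).tsum_le_tsum
    (indicator_le_indicator_of_subset (fun _ hi => le_trans hi hxy) hw_nonneg) (hw.indicator _)

lemma continuousAt [LinearOrder α] [TopologicalSpace α] [OrderClosedTopology α]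
    {E : Type*} [NormedAddCommGroup E] [CompleteSpace E] {w : ι → E} {x : α}
    (hw : Summable fun i => ‖w i‖) (hx : x ∉ range q) : ContinuousAt (jumpSum q w) x := by
  refine tendsto_tsum_of_dominated_convergence hw (fun i => ?_)
    (.of_forall fun _ i => norm_indicator_le_norm_self w i)
  have hloc : ∀ᶠ y in 𝓝 x, q i ≤ y ↔ q i ≤ x := eventually_le_iff_of_ne fun h => hx ⟨i, h⟩
  refine tendsto_const_nhds.congr' ?_
  filter_upwards [hloc] with y hy
  exact indicator_eq_indicator hy.symm rfl

end jumpSum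

theorem antiderivative_convex_and_deriv_at_irrational_general {ι : Type*} {q w : ι → ℝ}
    (hw : Summable w) (hw_nonneg : 0 ≤ w) (a : ℝ) :
    ConvexOn ℝ univ (fun x => ∫ t in a..x, jumpSum q w t) ∧
    ∀ x ∉ range q, HasDerivAt (fun u => ∫ t in a..u, jumpSum q w t) (jumpSum q w x) x := by
  have hmono : Monotone (jumpSum q w) := jumpSum.monotone hw hw_nonneg
  exact ⟨convexOn_integral_of_monotoneOn convex_univ (hmono.monotoneOn univ) (mem_univ a),
    fun _ hx => hasDerivAt_integral_of_monotone hmono (jumpSum.continuousAt hw.norm hx)⟩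

/-- For a bijective enumeration `q` of the rationals in `[0,1]`, the antiderivative
`G(x) = ∫₀ˣ g(t) dt` of `g(x) = Σ_{q(n) ≤ x} 2⁻ⁿ` is convex on `[0,1]` and is
differentiable at every irrational point of `(0,1)` with derivative `g(x)`. -/
theorem antiderivative_convex_and_deriv_at_irrational
    (q : ℕ → ℚ) (hq_inj : Function.Injective q)
    (hq_range : Set.range q = {r : ℚ | 0 ≤ r ∧ r ≤ 1})
    (g : ℝ → ℝ) (hg : ∀ x : ℝ, g x = ∑' n : ℕ, if (q n : ℝ) ≤ x then (1 / 2 : ℝ) ^ n else 0)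
    (G : ℝ → ℝ) (hG : ∀ x : ℝ, G x = ∫ t in (0:ℝ)..x, g t) :
    ConvexOn ℝ (Set.Icc (0:ℝ) 1) G ∧
    ∀ x ∈ Set.Ioo (0:ℝ) 1, Irrational x → HasDerivAt G (g x) x := by
  obtain rfl : g = jumpSum (fun n => (q n : ℝ)) (fun n => (1 / 2 : ℝ) ^ n) :=
    funext fun x => (hg x).trans (jumpSum.eq_tsum_ite _ _ x).symm
  obtain rfl : G = _ := funext hG
  obtain ⟨hconvex, hderiv⟩ := antiderivative_convex_and_deriv_at_irrational_general
    (q := fun n => (q n : ℝ)) summable_geometric_two (fun n => by positivity) 0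
  exact ⟨hconvex.subset (subset_univ _) (convex_Icc 0 1),
    fun x _ hx => hderiv x fun ⟨n, hn⟩ => hx.ne_rat (q n) hn.symm⟩
end

section
/- Let q : ℕ → ℚ ∩ [0,1] be a bijection, let g : [0,1] → ℝ be given by g(x) = Σ_{n : q(n) ≤ x} 2^{−n}, and let G(x) = ∫₀ˣ g(t) dt. Then G is not differentiable at any rational point x ∈ (0,1). Consequently there is no point x ∈ (0,1) at which G is twice differentiable in the classical sense, i.e. there is no x ∈ (0,1) admitting a neighborhood on which G is differentiable with derivative G' differentiable at x. -/
/-!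
The antiderivative of a monotone function has the left and right limits of that function as its
one-sided derivatives, so it is differentiable only where the function is continuous. The function
`g` is monotone and jumps by at least `2⁻ⁿ` at `q n`, because the `n`-th term enters the sum there;
hence `G` is not differentiable at `q n`. As the points `q n` are dense in `(0,1)`, every
neighbourhood of a point of `(0,1)` contains points where `G'` does not exist.
-/

open Filter MeasureTheory Set Topology

-- On the left, `FTCFilter` takes limits along `𝓝[≤] x`, but along `𝓝[>] x` on the right; as
-- `{x}` is a null set, this bridges the difference.
lemma nhdsLE_inf_ae_le_nhdsLT {α : Type*} [TopologicalSpace α] [PartialOrder α]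
    [MeasurableSpace α] (μ : Measure α) [NullSingletonClass μ] (x : α) :
    𝓝[≤] x ⊓ ae μ ≤ 𝓝[<] x := by
  have hne : ∀ᶠ y in 𝓝[≤] x ⊓ ae μ, y ≠ x :=
    mem_inf_of_right (compl_mem_ae_iff.2 (measure_singleton x))
  have hle : ∀ᶠ y in 𝓝[≤] x ⊓ ae μ, y ≤ x := mem_inf_of_left self_mem_nhdsWithin
  refine le_inf (inf_le_left.trans nhdsWithin_le_nhds) (le_principal_iff.2 ?_)
  filter_upwards [hne, hle] with y hne hle using hle.lt_of_ne hne

section OneSidedDerivatives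

variable {E : Type*} [NormedAddCommGroup E] [NormedSpace ℝ E] [CompleteSpace E]
  {f : ℝ → E} {a x : ℝ} {l r : E}

lemma hasDerivWithinAt_Iic_integral_of_tendsto (hf : IntervalIntegrable f volume a x)
    (hmeas : StronglyMeasurableAtFilter f (𝓝[≤] x)) (hl : Tendsto f (𝓝[<] x) (𝓝 l)) :
    HasDerivWithinAt (fun u => ∫ t in a..u, f t) l (Iic x) x :=
  intervalIntegral.integral_hasDerivWithinAt_of_tendsto_ae_right hf hmeas
    (hl.mono_left (nhdsLE_inf_ae_le_nhdsLT volume x))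

lemma hasDerivWithinAt_Ici_integral_of_tendsto (hf : IntervalIntegrable f volume a x)
    (hmeas : StronglyMeasurableAtFilter f (𝓝[>] x)) (hr : Tendsto f (𝓝[>] x) (𝓝 r)) :
    HasDerivWithinAt (fun u => ∫ t in a..u, f t) r (Ici x) x :=
  intervalIntegral.integral_hasDerivWithinAt_of_tendsto_ae_right hf hmeas
    (hr.mono_left inf_le_left)

lemma eq_of_differentiableAt_integral_of_tendsto (hf : IntervalIntegrable f volume a x)
    (hmeas : StronglyMeasurableAtFilter f (𝓝 x)) (hl : Tendsto f (𝓝[<] x) (𝓝 l))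
    (hr : Tendsto f (𝓝[>] x) (𝓝 r)) (hd : DifferentiableAt ℝ (fun u => ∫ t in a..u, f t) x) :
    l = r := by
  have hleft := hasDerivWithinAt_Iic_integral_of_tendsto hf
    (hmeas.filter_mono nhdsWithin_le_nhds) hl
  have hright := hasDerivWithinAt_Ici_integral_of_tendsto hf
    (hmeas.filter_mono nhdsWithin_le_nhds) hr
  have hderiv := hd.hasDerivAt
  exact ((uniqueDiffWithinAt_Iic x).eq_deriv _ hleft hderiv.hasDerivWithinAt).trans
    ((uniqueDiffWithinAt_Ici x).eq_deriv _ hderiv.hasDerivWithinAt hright)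

end OneSidedDerivatives

lemma continuousAt_of_differentiableAt_integral_of_monotone {f : ℝ → ℝ} (hf : Monotone f)
    {a x : ℝ} (hd : DifferentiableAt ℝ (fun u => ∫ t in a..u, f t) x) : ContinuousAt f x :=
  hf.continuousAt_iff_leftLim_eq_rightLim.2 <|
    eq_of_differentiableAt_integral_of_tendsto hf.intervalIntegrable
      hf.measurable.stronglyMeasurable.aestronglyMeasurable.stronglyMeasurableAtFilter
      (hf.tendsto_leftLim x) (hf.tendsto_rightLim x) hd

/-- The jump function with a jump of size `w i` at each point `s i`, normalised to be
right-continuous and to vanish at `-∞` (for summable `w`). The function `g` is the case `s = q`,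
`w n = 2⁻ⁿ`. -/
noncomputable def jumpFunction {ι : Type*} (s w : ι → ℝ) (x : ℝ) : ℝ :=
  ∑' i, (s ⁻¹' Iic x).indicator w i

namespace jumpFunction

variable {ι : Type*} {s w : ι → ℝ} {x y : ℝ}

lemma eq_tsum_ite (s w : ι → ℝ) (x : ℝ) :
    jumpFunction s w x = ∑' i, if s i ≤ x then w i else 0 := by
  classical
  simp only [jumpFunction, indicator_apply, mem_preimage, mem_Iic]

lemma sub_eq_tsum (hw : Summable w) (hyx : y ≤ x) :
    jumpFunction s w x - jumpFunction s w y = ∑' i, (s ⁻¹' Ioc y x).indicator w i := by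
  have hsub : s ⁻¹' Iic y ⊆ s ⁻¹' Iic x := preimage_mono (Iic_subset_Iic.2 hyx)
  rw [jumpFunction, jumpFunction, ← (hw.indicator _).tsum_sub (hw.indicator _),
    ← Iic_sdiff_Iic, preimage_sdiff, indicator_sdiff hsub]
  rfl

lemma monotone (hw : Summable w) (hw₀ : 0 ≤ w) : Monotone (jumpFunction s w) := by
  intro y x hyx
  rw [← sub_nonneg, sub_eq_tsum hw hyx]
  exact tsum_nonneg fun i => indicator_nonneg (fun i _ => hw₀ i) i

lemma add_le_of_lt (hw : Summable w) (hw₀ : 0 ≤ w) {i : ι} (hy : y < s i) :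
    jumpFunction s w y + w i ≤ jumpFunction s w (s i) := by
  have hi : i ∈ s ⁻¹' Ioc y (s i) := ⟨hy, le_rfl⟩
  have hterm := (hw.indicator (s ⁻¹' Ioc y (s i))).le_tsum i
    fun j _ => indicator_nonneg (fun j _ => hw₀ j) j
  rw [indicator_of_mem hi, ← sub_eq_tsum hw hy.le] at hterm
  linarith

lemma not_continuousAt (hw : Summable w) (hw₀ : 0 ≤ w) {i : ι} (hi : 0 < w i) :
    ¬ ContinuousAt (jumpFunction s w) (s i) := by
  intro hcont
  have hleft : Tendsto (fun y => jumpFunction s w y + w i) (𝓝[<] s i)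
      (𝓝 (jumpFunction s w (s i) + w i)) :=
    (hcont.tendsto.mono_left nhdsWithin_le_nhds).add_const _
  have hle : jumpFunction s w (s i) + w i ≤ jumpFunction s w (s i) :=
    le_of_tendsto hleft (eventually_nhdsWithin_of_forall fun _ hy => add_le_of_lt hw hw₀ hy)
  linarith

lemma not_differentiableAt_integral (hw : Summable w) (hw₀ : 0 ≤ w) {i : ι} (hi : 0 < w i)
    (a : ℝ) : ¬ DifferentiableAt ℝ (fun u => ∫ t in a..u, jumpFunction s w t) (s i) := fun hd =>
  not_continuousAt hw hw₀ hi
    (continuousAt_of_differentiableAt_integral_of_monotone (monotone hw hw₀) hd)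

end jumpFunction

lemma Ioo_inter_range_ratCast_subset {ι : Type*} {q : ι → ℚ} (hq : Icc 0 1 ⊆ range q) :
    Ioo (0 : ℝ) 1 ∩ range ((↑) : ℚ → ℝ) ⊆ range fun i => (q i : ℝ) := by
  rintro _ ⟨⟨h₀, h₁⟩, r, rfl⟩
  obtain ⟨i, rfl⟩ : r ∈ range q := hq ⟨by exact_mod_cast h₀.le, by exact_mod_cast h₁.le⟩
  exact ⟨i, rfl⟩

theorem antiderivative_not_differentiable_at_rationals_general {ι : Type*} {s w : ι → ℝ}
    (hw : Summable w) (hw_pos : ∀ i, 0 < w i) {I D : Set ℝ} (hI : IsOpen I) (hD : Dense D)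
    (hs : I ∩ D ⊆ range s) {g : ℝ → ℝ} (hg : ∀ x, g x = ∑' i, if s i ≤ x then w i else 0)
    {G : ℝ → ℝ} {a : ℝ} (hG : ∀ x, G x = ∫ t in a..x, g t) :
    (∀ x ∈ I, x ∈ D → ¬ DifferentiableAt ℝ G x) ∧
    ∀ x ∈ I, ¬ ∀ᶠ y in 𝓝 x, DifferentiableAt ℝ G y := by
  obtain rfl : g = jumpFunction s w :=
    funext fun x => (hg x).trans (jumpFunction.eq_tsum_ite s w x).symm
  obtain rfl : G = fun x => ∫ t in a..x, jumpFunction s w t := funext hG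
  have hnot : ∀ x ∈ I ∩ D, ¬ DifferentiableAt ℝ (fun x => ∫ t in a..x, jumpFunction s w t) x := by
    intro x hx
    obtain ⟨i, rfl⟩ := hs hx
    exact jumpFunction.not_differentiableAt_integral hw (fun i => (hw_pos i).le) (hw_pos i) a
  refine ⟨fun x hxI hxD => hnot x ⟨hxI, hxD⟩, fun x hx hdiff => ?_⟩
  have hfreq : ∃ᶠ y in 𝓝 x, y ∈ I ∩ D :=
    mem_closure_iff_frequently.1 (hD.open_subset_closure_inter hI hx)
  obtain ⟨y, hy, hdy⟩ := (hfreq.and_eventually hdiff).exists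
  exact hnot y hy hdy

/-- For a bijective enumeration `q` of the rationals in `[0,1]`, the antiderivative
`G(x) = ∫₀ˣ g(t) dt` of `g(x) = Σ_{q(n) ≤ x} 2⁻ⁿ` is not differentiable at any rational
point of `(0,1)`; consequently there is no point of `(0,1)` at which `G` is twice
differentiable in the classical sense. -/
theorem antiderivative_not_differentiable_at_rationals
    (q : ℕ → ℚ) (hq_inj : Function.Injective q)
    (hq_range : Set.range q = {r : ℚ | 0 ≤ r ∧ r ≤ 1})
    (g : ℝ → ℝ) (hg : ∀ x : ℝ, g x = ∑' n : ℕ, if (q n : ℝ) ≤ x then (1 / 2 : ℝ) ^ n else 0)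
    (G : ℝ → ℝ) (hG : ∀ x : ℝ, G x = ∫ t in (0:ℝ)..x, g t) :
    (∀ x ∈ Set.Ioo (0:ℝ) 1, (∃ r : ℚ, (r : ℝ) = x) → ¬ DifferentiableAt ℝ G x) ∧
    ¬ ∃ x ∈ Set.Ioo (0:ℝ) 1, ∃ U ∈ nhds x, ∃ G' : ℝ → ℝ,
        (∀ y ∈ U, HasDerivAt G (G' y) y) ∧ DifferentiableAt ℝ G' x := by
  refine (antiderivative_not_differentiable_at_rationals_general summable_geometric_two
    (fun n => by positivity) isOpen_Ioo Rat.denseRange_cast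
    (Ioo_inter_range_ratCast_subset hq_range.ge) hg hG).imp_right ?_
  rintro hnot ⟨x, hx, U, hU, G', hG', -⟩
  exact hnot x hx (mem_of_superset hU fun y hy => (hG' y hy).differentiableAt)
end

section
/- Let f : [−1,1] → ℝ be defined by f(0) = 0, f(x) = x² if |x| = 1/n for some n ∈ ℕ, and f(x) = ((2n+1)/(n(n+1)))|x| − 1/(n(n+1)) if 1/(n+1) < |x| < 1/n for some n ∈ ℕ. Then: (a) f is convex on [−1,1]; (b) there exists a monotone function Θ : [0,∞) → ℝ with lim_{t→0} Θ(t) = 0 such that for every x ∈ (−1,1) and every subdifferential v of f at x one has |v − 2x| ≤ Θ(|x|)·|x| (so f is twice differentiable at 0 in the generalized sense with generalized first derivative 0 and generalized second derivative 2); (c) f is not twice differentiable at 0 in the classical sense: there is no neighborhood of 0 on which f is differentiable at every point. -/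
/-!
Write `L_n` for the secant line of `t ↦ t²` through the points over `1/(n+1)` and `1/n`, so that
`t² - L_n t = (t - 1/(n+1)) (t - 1/n)`. This is nonpositive only between the two nodes, where
`f t = L_n |t|`; hence `t² ≤ f t` and `L_n |t| ≤ f t` on all of `[-1, 1]`.

* The slope of `L_n` is therefore a subgradient of `f` at every point of `[1/(n+1), 1/n]`, and a
  function with a subgradient at every point is convex. At `1/(n+1)` the slopes of `L_n` and
  `L_{n+1}` are two different subgradients, so `f` is not differentiable there.
* If `v` is a subgradient at `x` and `y` is a node, then `v (y - x) ≤ f y - f x ≤ y² - x²`, which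
  bounds `v - 2x` by `y - x` on the side of `x` where `y` lies. The nodes next to `x` are at
  distance at most `2x²`.
-/

open Filter Set Topology
open scoped Pointwise

/-- `v` is a subgradient at `x` of the restriction of `f` to `s` (a *subdifferential* in the sense
of the paper). The point `x` is not required to lie in `s`. -/
def IsSubgradientWithin {R : Type*} [Ring R] [LE R] (f : R → R) (s : Set R) (v x : R) : Prop :=
  ∀ y ∈ s, f x + v * (y - x) ≤ f y

lemma IsSubgradientWithin.comp_neg {R : Type*} [Ring R] [LE R] {f : R → R} {s : Set R} {v x : R}
    (hv : IsSubgradientWithin f s v x) :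
    IsSubgradientWithin (fun y => f (-y)) (-s) (-v) (-x) := fun y hy => by
  have hslope : -v * (y - -x) = v * (-y - x) := by noncomm_ring
  simpa only [neg_neg, hslope] using hv (-y) hy

/-- The secant line of `t ↦ t ^ 2` through the points over `a` and `b`, as a function of `t`. For
`a = b` it is the tangent line. -/
def sqSecant {R : Type*} [Ring R] (a b t : R) : R :=
  (a + b) * t - a * b

section OrderedRing

variable {R : Type*} [CommRing R]

lemma sq_sub_sqSecant (a b t : R) : t ^ 2 - sqSecant a b t = (t - a) * (t - b) := by
  unfold sqSecant
  ring

lemma sqSecant_left (a b : R) : sqSecant a b a = a ^ 2 := by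
  unfold sqSecant
  ring

lemma sqSecant_right (a b : R) : sqSecant a b b = b ^ 2 := by
  unfold sqSecant
  ring

lemma sqSecant_add_mul_sub (a b x y : R) :
    sqSecant a b x + (a + b) * (y - x) = sqSecant a b y := by
  unfold sqSecant
  ring

variable [LinearOrder R] [IsStrictOrderedRing R]

lemma sq_le_sqSecant {a b t : R} (ht : t ∈ Icc a b) : t ^ 2 ≤ sqSecant a b t := by
  rw [← sub_nonpos, sq_sub_sqSecant]
  exact mul_nonpos_of_nonneg_of_nonpos (sub_nonneg.2 ht.1) (sub_nonpos.2 ht.2)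

lemma sqSecant_le_sq {a b t : R} (hab : a ≤ b) (ht : t ∉ Icc a b) : sqSecant a b t ≤ t ^ 2 := by
  rw [← sub_nonneg, sq_sub_sqSecant]
  rcases lt_or_ge t a with hta | hat
  · exact mul_nonneg_of_nonpos_of_nonpos (sub_nonpos.2 hta.le) (sub_nonpos.2 (hta.le.trans hab))
  · have hbt : b ≤ t := (not_le.1 fun htb => ht ⟨hat, htb⟩).le
    exact mul_nonneg (sub_nonneg.2 hat) (sub_nonneg.2 hbt)

lemma sqSecant_mono {a b : R} (hab : 0 ≤ a + b) : Monotone (sqSecant a b) := fun _ _ hst =>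
  sub_le_sub_right (mul_le_mul_of_nonneg_left hst hab) _

lemma convexOn_of_forall_exists_isSubgradientWithin {f : R → R} {s : Set R} (hs : Convex R s)
    (hf : ∀ x ∈ s, ∃ v, IsSubgradientWithin f s v x) : ConvexOn R s f := by
  refine ⟨hs, fun x hx y hy a b ha hb hab => ?_⟩
  obtain ⟨v, hv⟩ := hf _ (hs hx hy ha hb hab)
  have hvx := mul_le_mul_of_nonneg_left (hv x hx) ha
  have hvy := mul_le_mul_of_nonneg_left (hv y hy) hb
  simp only [smul_eq_mul] at hvx hvy ⊢
  obtain rfl : b = 1 - a := eq_sub_of_add_eq' hab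
  linarith

namespace IsSubgradientWithin

variable {f : R → R} {s : Set R} {v x : R}

lemma mul_sub_le (hv : IsSubgradientWithin f s v x) (hx : x ^ 2 ≤ f x) {y : R} (hy : y ∈ s)
    (hfy : f y ≤ y ^ 2) : v * (y - x) ≤ (y + x) * (y - x) :=
  calc v * (y - x) ≤ f y - f x := le_sub_iff_add_le'.2 (hv y hy)
    _ ≤ y ^ 2 - x ^ 2 := sub_le_sub hfy hx
    _ = (y + x) * (y - x) := sq_sub_sq y x

lemma abs_sub_two_mul_le (hv : IsSubgradientWithin f s v x) (hx : x ^ 2 ≤ f x) {a b ε : R}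
    (has : a ∈ s) (hfa : f a ≤ a ^ 2) (hax : a < x) (hxa : x - a ≤ ε)
    (hbs : b ∈ s) (hfb : f b ≤ b ^ 2) (hxb : x < b) (hbx : b - x ≤ ε) :
    |v - 2 * x| ≤ ε := by
  have hlower : a + x ≤ v :=
    (mul_le_mul_right_of_neg (sub_neg.2 hax)).1 (hv.mul_sub_le hx has hfa)
  have hupper : v ≤ b + x := le_of_mul_le_mul_right (hv.mul_sub_le hx hbs hfb) (sub_pos.2 hxb)
  rw [abs_le]
  constructor <;> linarith

end IsSubgradientWithin

end OrderedRing

lemma IsSubgradientWithin.eq_of_hasDerivAt {f : ℝ → ℝ} {s : Set ℝ} {v x f' : ℝ}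
    (hv : IsSubgradientWithin f s v x) (hs : s ∈ 𝓝 x) (hf : HasDerivAt f f' x) : v = f' := by
  have hmin : IsLocalMin (fun y => f y - v * y) x := by
    filter_upwards [hs] with y hy
    linarith [hv y hy]
  have hderiv : HasDerivAt (fun y => f y - v * y) (f' - v) x :=
    hf.sub (hasDerivAt_const_mul v)
  exact (sub_eq_zero.1 (hmin.hasDerivAt_eq_zero hderiv)).symm

section Reciprocals

variable {K : Type*} [Field K] [LinearOrder K] [IsStrictOrderedRing K]

lemma one_div_add_one_lt_one_div {t : K} (ht : 0 < t) : 1 / (t + 1) < 1 / t :=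
  one_div_lt_one_div_of_lt ht (lt_add_one t)

lemma one_div_sub_one_div_add_one_le {t : K} (ht : 1 ≤ t) :
    1 / t - 1 / (t + 1) ≤ 2 * (1 / (t + 1)) ^ 2 := by
  have : 0 < t := zero_lt_one.trans_le ht
  have hdiff : 2 * (1 / (t + 1)) ^ 2 - (1 / t - 1 / (t + 1)) = (t - 1) / (t * (t + 1) ^ 2) := by
    field_simp
    ring
  rw [← sub_nonneg, hdiff]
  exact div_nonneg (sub_nonneg.2 ht) (by positivity)

lemma one_div_natCast_mem_Ioc {n : ℕ} (hn : 1 ≤ n) : 1 / (n : K) ∈ Ioc 0 1 := by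
  have hn' : (1 : K) ≤ n := mod_cast hn
  exact ⟨by positivity, div_le_one_of_le₀ hn' n.cast_nonneg⟩

variable [FloorSemiring K]

lemma exists_one_div_add_one_lt_and_le_one_div {t : K} (ht : t ∈ Ioc 0 1) :
    ∃ n : ℕ, 1 ≤ n ∧ 1 / ((n : K) + 1) < t ∧ t ≤ 1 / (n : K) := by
  have hfloor : 1 ≤ ⌊1 / t⌋₊ := Nat.le_floor (by simpa using (one_le_div ht.1).2 ht.2)
  refine ⟨⌊1 / t⌋₊, hfloor, ?_, ?_⟩
  · exact (one_div_lt (by positivity) ht.1).2 (Nat.lt_floor_add_one _)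
  · exact (le_one_div ht.1 (mod_cast hfloor)).2 (Nat.floor_le (one_div_pos.2 ht.1).le)

lemma exists_one_div_add_one_le_and_lt_one_div {t : K} (ht : t ∈ Ioo 0 1) :
    ∃ n : ℕ, 1 ≤ n ∧ 1 / ((n : K) + 1) ≤ t ∧ t < 1 / (n : K) := by
  have hceil : 1 < ⌈1 / t⌉₊ := Nat.lt_ceil.2 (by simpa using (one_lt_div ht.1).2 ht.2)
  obtain ⟨n, hn⟩ : ∃ n, ⌈1 / t⌉₊ = n + 1 := Nat.exists_eq_add_one.2 (by omega)
  have hn₁ : 1 ≤ n := by omega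
  refine ⟨n, hn₁, (one_div_le (by positivity) ht.1).2 ?_, (lt_one_div ht.1 (mod_cast hn₁)).2 ?_⟩
  · exact_mod_cast hn ▸ Nat.le_ceil (1 / t)
  · exact Nat.lt_ceil.1 (hn ▸ n.lt_succ_self)

end Reciprocals

/-- `f` is, on `[-1, 1]`, the function of the paper: `x ^ 2` at the nodes `0` and `±1/n`, and
affine between consecutive nonzero nodes. Nothing is said about `f` outside `[-1, 1]`. -/
structure IsReciprocalSqInterpolant (f : ℝ → ℝ) : Prop where
  zero : f 0 = 0
  eq_sq : ∀ n : ℕ, 1 ≤ n → ∀ x : ℝ, |x| = 1 / (n : ℝ) → f x = x ^ 2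
  eq_affine : ∀ n : ℕ, 1 ≤ n → ∀ x : ℝ, 1 / ((n : ℝ) + 1) < |x| → |x| < 1 / (n : ℝ) →
    f x = ((2 * (n : ℝ) + 1) / ((n : ℝ) * ((n : ℝ) + 1))) * |x| - 1 / ((n : ℝ) * ((n : ℝ) + 1))

namespace IsReciprocalSqInterpolant

variable {f : ℝ → ℝ} {n : ℕ} {v x : ℝ}

lemma comp_neg (hf : IsReciprocalSqInterpolant f) :
    IsReciprocalSqInterpolant fun x => f (-x) where
  zero := by simpa using hf.zero
  eq_sq n hn x hx := by simpa using hf.eq_sq n hn (-x) (by simpa using hx)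
  eq_affine n hn x hlower hupper := by
    simpa using hf.eq_affine n hn (-x) (by simpa using hlower) (by simpa using hupper)

lemma apply_one_div (hf : IsReciprocalSqInterpolant f) (hn : 1 ≤ n) :
    f (1 / (n : ℝ)) = (1 / (n : ℝ)) ^ 2 :=
  hf.eq_sq n hn _ (abs_of_nonneg (by positivity))

lemma eq_sqSecant (hf : IsReciprocalSqInterpolant f) (hn : 1 ≤ n)
    (hx : |x| ∈ Icc (1 / ((n : ℝ) + 1)) (1 / (n : ℝ))) :
    f x = sqSecant (1 / ((n : ℝ) + 1)) (1 / (n : ℝ)) |x| := by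
  rcases hx.1.eq_or_lt with hleft | hlower
  · rw [← hleft, sqSecant_left, hleft, sq_abs]
    exact hf.eq_sq (n + 1) n.succ_pos x (by rw [← hleft, Nat.cast_succ])
  rcases hx.2.eq_or_lt with hright | hupper
  · rw [hright, sqSecant_right, ← hright, sq_abs, hf.eq_sq n hn x hright]
  have : (0 : ℝ) < n := mod_cast hn
  rw [hf.eq_affine n hn x hlower hupper, sqSecant]
  field_simp
  ring

lemma sq_le (hf : IsReciprocalSqInterpolant f) (hx : x ∈ Icc (-1) 1) : x ^ 2 ≤ f x := by
  rcases eq_or_ne x 0 with rfl | hx₀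
  · simp [hf.zero]
  obtain ⟨n, hn, hlower, hupper⟩ :=
    exists_one_div_add_one_lt_and_le_one_div ⟨abs_pos.2 hx₀, abs_le.2 hx⟩
  have hmem : |x| ∈ Icc (1 / ((n : ℝ) + 1)) (1 / (n : ℝ)) := ⟨hlower.le, hupper⟩
  rw [hf.eq_sqSecant hn hmem, ← sq_abs]
  exact sq_le_sqSecant hmem

lemma sqSecant_le (hf : IsReciprocalSqInterpolant f) (hn : 1 ≤ n) (hx : x ∈ Icc (-1) 1) :
    sqSecant (1 / ((n : ℝ) + 1)) (1 / (n : ℝ)) |x| ≤ f x := by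
  by_cases hmem : |x| ∈ Icc (1 / ((n : ℝ) + 1)) (1 / (n : ℝ))
  · exact (hf.eq_sqSecant hn hmem).ge
  · calc sqSecant (1 / ((n : ℝ) + 1)) (1 / (n : ℝ)) |x| ≤ |x| ^ 2 :=
          sqSecant_le_sq (one_div_add_one_lt_one_div (mod_cast hn)).le hmem
      _ = x ^ 2 := sq_abs x
      _ ≤ f x := hf.sq_le hx

lemma isSubgradientWithin_secant_slope (hf : IsReciprocalSqInterpolant f) (hn : 1 ≤ n)
    (hx : x ∈ Icc (1 / ((n : ℝ) + 1)) (1 / (n : ℝ))) :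
    IsSubgradientWithin f (Icc (-1) 1) (1 / ((n : ℝ) + 1) + 1 / (n : ℝ)) x := fun y hy => by
  have habs : |x| = x := abs_of_nonneg (le_trans (by positivity) hx.1)
  rw [hf.eq_sqSecant hn (habs.symm ▸ hx), habs, sqSecant_add_mul_sub]
  exact (sqSecant_mono (by positivity) (le_abs_self y)).trans (hf.sqSecant_le hn hy)

lemma isSubgradientWithin_zero (hf : IsReciprocalSqInterpolant f) :
    IsSubgradientWithin f (Icc (-1) 1) 0 0 := fun y hy => by
  simpa [hf.zero] using (sq_nonneg y).trans (hf.sq_le hy)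

lemma exists_isSubgradientWithin (hf : IsReciprocalSqInterpolant f) (hx : x ∈ Icc (-1) 1) :
    ∃ v, IsSubgradientWithin f (Icc (-1) 1) v x := by
  wlog hx₀ : 0 ≤ x generalizing f x
  · obtain ⟨v, hv⟩ := this hf.comp_neg (x := -x) (by simpa [and_comm, neg_le] using hx)
      (neg_nonneg.2 (not_le.1 hx₀).le)
    exact ⟨-v, by simpa using hv.comp_neg⟩
  rcases hx₀.eq_or_lt with rfl | hpos
  · exact ⟨0, hf.isSubgradientWithin_zero⟩
  · obtain ⟨n, hn, hlower, hupper⟩ := exists_one_div_add_one_lt_and_le_one_div ⟨hpos, hx.2⟩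
    exact ⟨_, hf.isSubgradientWithin_secant_slope hn ⟨hlower.le, hupper⟩⟩

theorem convexOn (hf : IsReciprocalSqInterpolant f) : ConvexOn ℝ (Icc (-1) 1) f :=
  convexOn_of_forall_exists_isSubgradientWithin (convex_Icc _ _) fun _ =>
    hf.exists_isSubgradientWithin

lemma eq_zero_of_isSubgradientWithin_zero (hf : IsReciprocalSqInterpolant f)
    (hv : IsSubgradientWithin f (Icc (-1) 1) v 0) : v = 0 := by
  have hbound (n : ℕ) : |v| ≤ 1 / ((n : ℝ) + 1) := by
    have hnode := one_div_natCast_mem_Ioc (K := ℝ) n.succ_pos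
    have hright := hf.apply_one_div n.succ_pos
    have hleft := hf.comp_neg.apply_one_div n.succ_pos
    rw [Nat.cast_succ] at hnode hright hleft
    simpa using hv.abs_sub_two_mul_le (by simp [hf.zero])
      ⟨neg_le_neg hnode.2, by linarith [hnode.1]⟩ (by rw [hleft, neg_sq])
      (neg_neg_of_pos hnode.1) (by rw [zero_sub, neg_neg])
      ⟨by linarith [hnode.1], hnode.2⟩ hright.le hnode.1 (sub_zero _).le
  exact abs_nonpos_iff.1 (ge_of_tendsto' tendsto_one_div_add_atTop_nhds_zero_nat hbound)

lemma abs_subgradient_sub_two_mul_le_of_pos (hf : IsReciprocalSqInterpolant f)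
    (hx : x ∈ Ioo 0 1) (hv : IsSubgradientWithin f (Icc (-1) 1) v x) :
    |v - 2 * x| ≤ 2 * x ^ 2 := by
  have hnode_mem {n : ℕ} (hn : 1 ≤ n) : 1 / (n : ℝ) ∈ Icc (-1) 1 :=
    ⟨by linarith [(one_div_natCast_mem_Ioc (K := ℝ) hn).1], (one_div_natCast_mem_Ioc hn).2⟩
  have hgap {n : ℕ} (hn : 1 ≤ n) (hnx : 1 / ((n : ℝ) + 1) ≤ x) :
      1 / (n : ℝ) - 1 / ((n : ℝ) + 1) ≤ 2 * x ^ 2 :=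
    (one_div_sub_one_div_add_one_le (mod_cast hn)).trans (by gcongr)
  obtain ⟨m, hm, hmx, hxm⟩ := exists_one_div_add_one_lt_and_le_one_div ⟨hx.1, hx.2.le⟩
  obtain ⟨n, hn, hnx, hxn⟩ := exists_one_div_add_one_le_and_lt_one_div hx
  have hleft_mem := hnode_mem m.succ_pos
  have hleft := hf.apply_one_div m.succ_pos
  rw [Nat.cast_succ] at hleft_mem hleft
  exact hv.abs_sub_two_mul_le (hf.sq_le ⟨by linarith [hx.1], hx.2.le⟩)
    hleft_mem hleft.le hmx (by linarith [hgap hm hmx.le])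
    (hnode_mem hn) (hf.apply_one_div hn).le hxn (by linarith [hgap hn hnx])

theorem abs_subgradient_sub_two_mul_le (hf : IsReciprocalSqInterpolant f) (hx : x ∈ Ioo (-1) 1)
    (hv : IsSubgradientWithin f (Icc (-1) 1) v x) : |v - 2 * x| ≤ 2 * x ^ 2 := by
  wlog hx₀ : 0 ≤ x generalizing f x v
  · have hneg := this hf.comp_neg (x := -x) (v := -v) (by simpa [and_comm, neg_lt] using hx)
      (by simpa using hv.comp_neg) (neg_nonneg.2 (not_le.1 hx₀).le)
    rwa [show -v - 2 * -x = -(v - 2 * x) by ring, abs_neg, neg_sq] at hneg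
  rcases hx₀.eq_or_lt with rfl | hpos
  · simp [hf.eq_zero_of_isSubgradientWithin_zero hv]
  · exact hf.abs_subgradient_sub_two_mul_le_of_pos ⟨hpos, hx.2⟩ hv

theorem not_differentiableAt (hf : IsReciprocalSqInterpolant f) (hn : 1 ≤ n) :
    ¬ DifferentiableAt ℝ f (1 / ((n : ℝ) + 1)) := by
  intro hdiff
  have hn₀ : (0 : ℝ) < n := mod_cast hn
  have hlt := one_div_add_one_lt_one_div hn₀
  have hlt_succ := one_div_add_one_lt_one_div (add_pos hn₀ one_pos)
  have hnhds : Icc (-1) 1 ∈ 𝓝 (1 / ((n : ℝ) + 1)) :=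
    Icc_mem_nhds (neg_one_lt_zero.trans (by positivity))
      (hlt.trans_le (one_div_natCast_mem_Ioc hn).2)
  have hright := hf.isSubgradientWithin_secant_slope hn ⟨le_rfl, hlt.le⟩
  have hleft := hf.isSubgradientWithin_secant_slope n.succ_pos (x := 1 / ((n : ℝ) + 1))
    (by simpa only [Nat.cast_succ] using ⟨hlt_succ.le, le_rfl⟩)
  have hslopes := (hright.eq_of_hasDerivAt hnhds hdiff.hasDerivAt).trans
    (hleft.eq_of_hasDerivAt hnhds hdiff.hasDerivAt).symm
  rw [Nat.cast_succ] at hslopes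
  linarith

end IsReciprocalSqInterpolant

/-- The piecewise function interpolating `x²` at the points `±1/n` is convex, is twice
differentiable at `0` in the generalized sense (with generalized first derivative `0` and
generalized second derivative `2`), but there is no neighborhood of `0` on which it is
differentiable at every point. -/
theorem generalized_second_derivative_example
    (f : ℝ → ℝ) (hf0 : f 0 = 0)
    (hf_sq : ∀ n : ℕ, 1 ≤ n → ∀ x : ℝ, |x| = 1 / (n : ℝ) → f x = x ^ 2)
    (hf_lin : ∀ n : ℕ, 1 ≤ n → ∀ x : ℝ, 1 / ((n : ℝ) + 1) < |x| → |x| < 1 / (n : ℝ) →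
      f x = ((2 * (n : ℝ) + 1) / ((n : ℝ) * ((n : ℝ) + 1))) * |x| - 1 / ((n : ℝ) * ((n : ℝ) + 1))) :
    ConvexOn ℝ (Set.Icc (-1 : ℝ) 1) f ∧
    (∃ Θ : ℝ → ℝ, Monotone Θ ∧
      Filter.Tendsto Θ (nhdsWithin 0 (Set.Ici 0)) (nhds 0) ∧
      ∀ x ∈ Set.Ioo (-1 : ℝ) 1, ∀ v : ℝ,
        (∀ y ∈ Set.Icc (-1 : ℝ) 1, f x + v * (y - x) ≤ f y) →
        |v - 2 * x| ≤ Θ |x| * |x|) ∧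
    ¬ ∃ U ∈ nhds (0 : ℝ), ∀ x ∈ U, DifferentiableAt ℝ f x := by
 
  have hf : IsReciprocalSqInterpolant f := ⟨hf0, hf_sq, hf_lin⟩
  refine ⟨hf.convexOn, ⟨fun t => 2 * t, monotone_id.const_mul zero_le_two, ?_, ?_⟩, ?_⟩
  · exact ((continuous_const_mul 2).tendsto' 0 0 (mul_zero 2)).mono_left nhdsWithin_le_nhds
  · intro x hx v hv
    calc |v - 2 * x| ≤ 2 * x ^ 2 := hf.abs_subgradient_sub_two_mul_le hx hv
      _ = 2 * |x| * |x| := by rw [mul_assoc, abs_mul_abs_self, sq]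
  · rintro ⟨U, hU, hdiff⟩
    have hnodes : ∀ᶠ n : ℕ in atTop, 1 / ((n : ℝ) + 1) ∈ U :=
      tendsto_one_div_add_atTop_nhds_zero_nat.eventually hU
    obtain ⟨n, hnU, hn⟩ := (hnodes.and (eventually_ge_atTop 1)).exists
    exact hf.not_differentiableAt hn (hdiff _ hnU)
end

section
/- Let U be a convex open subset of ℝⁿ, f : U → ℝ convex, x₀ ∈ U, and suppose f is twice differentiable at x₀ in the generalized sense with generalized Hesse matrix A, i.e. there exist a vector v₀ that is a subdifferential of f at x₀, a linear map A : ℝⁿ → ℝⁿ, a monotone function Θ : [0,∞) → ℝ with lim_{t→0} Θ(t) = 0, and a neighborhood V ⊆ U of x₀ such that for all x ∈ V and every subdifferential v of f at x, ‖v − v₀ − A(x − x₀)‖₂ ≤ Θ(‖x − x₀‖₂)·‖x − x₀‖₂. Then A is positive semidefinite: ⟨A w, w⟩ ≥ 0 for all w ∈ ℝⁿ. -/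
open scoped InnerProductSpace

/-!
Subgradients of a convex function are monotone: if `v` is a subgradient at `x` and `v₀` one at
`x₀`, then `0 ≤ ⟪v - v₀, x - x₀⟫`. A continuous convex function has a subgradient `v` at every point
`x` near `x₀`, and replacing `v - v₀` by `A (x - x₀)` in this inequality costs `o(‖x - x₀‖ ^ 2)`.
So the quadratic form `u ↦ ⟪A u, u⟫` is at least `-o(‖u‖ ^ 2)` near the origin, and by homogeneity
it is nonnegative.
-/

open Filter Topology

theorem isOpen_strict_epigraph {X β : Type*} [TopologicalSpace X] [TopologicalSpace β]
    [LinearOrder β] [OrderClosedTopology β] {U : Set X} {f : X → β} (hU : IsOpen U)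
    (hf : ContinuousOn f U) : IsOpen {p : X × β | p.1 ∈ U ∧ f p.1 < p.2} :=
  ((hf.comp continuousOn_fst fun _ hp => hp).prodMk continuousOn_snd).isOpen_inter_preimage
    (hU.preimage continuous_fst) isOpen_lt_prod

theorem exists_dual_add_le_of_convexOn {E : Type*} [AddCommGroup E] [Module ℝ E]
    [TopologicalSpace E] [IsTopologicalAddGroup E] [ContinuousSMul ℝ E] {U : Set E} {f : E → ℝ}
    (hU : IsOpen U) (hf : ConvexOn ℝ U f) (hfc : ContinuousOn f U) {x : E} (hx : x ∈ U) :
    ∃ l : E →L[ℝ] ℝ, ∀ y ∈ U, f x + l (y - x) ≤ f y := by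
  obtain ⟨g, hg⟩ := geometric_hahn_banach_open_point (x := (x, f x)) hf.convex_strict_epigraph
    (isOpen_strict_epigraph hU hfc) fun h => lt_irrefl _ h.2
  let l : E →L[ℝ] ℝ := g.comp (.inl ℝ E ℝ)
  set c := g (0, 1)
  have g_apply (y : E) (t : ℝ) : g (y, t) = l y + t * c := by
    rw [← smul_eq_mul, ← map_smul, ContinuousLinearMap.comp_apply, ← map_add]
    simp
  have separation {y : E} (hy : y ∈ U) {t : ℝ} (ht : f y < t) :
      l y + t * c < l x + f x * c := by
    simpa only [g_apply] using hg (y, t) ⟨hy, ht⟩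
  -- Points straight above `(x, f x)` lie in the epigraph, so the hyperplane is not vertical.
  have c_neg : c < 0 := by linarith [separation hx (lt_add_one (f x))]
  refine ⟨(-c)⁻¹ • l, fun y hy => le_of_forall_gt_imp_ge_of_dense fun t ht => ?_⟩
  have slope_le : (-c)⁻¹ * (l y - l x) ≤ t - f x := by
    rw [inv_mul_le_iff₀ (neg_pos.2 c_neg)]
    linarith [separation hy ht]
  rw [smul_apply, map_sub, smul_eq_mul]
  linarith

theorem quadraticForm_nonneg_of_eventually_neg_le {E : Type*} [SeminormedAddCommGroup E]
    [NormedSpace ℝ E] (Q : QuadraticForm ℝ E)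
    (hQ : ∀ ε > 0, ∀ᶠ u in 𝓝 0, -(ε * ‖u‖ ^ 2) ≤ Q u) (w : E) : 0 ≤ Q w := by
  have smul_tendsto : Tendsto (fun t : ℝ => t • w) (𝓝[>] 0) (𝓝 0) :=
    (Continuous.tendsto' (by fun_prop) 0 0 (zero_smul ℝ w)).mono_left nhdsWithin_le_nhds
  have lower_bound : ∀ ε > 0, -(ε * ‖w‖ ^ 2) ≤ Q w := fun ε hε => by
    obtain ⟨t, hQt, ht⟩ := ((smul_tendsto.eventually (hQ ε hε)).and self_mem_nhdsWithin).exists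
    rw [norm_smul, mul_pow, Real.norm_eq_abs, sq_abs, Q.map_smul, smul_eq_mul] at hQt
    refine le_of_mul_le_mul_left ?_ (mul_self_pos.2 (ne_of_gt ht))
    linarith
  have limit : Tendsto (fun ε : ℝ => -(ε * ‖w‖ ^ 2)) (𝓝[>] 0) (𝓝 0) :=
    (Continuous.tendsto' (by fun_prop) 0 0 (by simp)).mono_left nhdsWithin_le_nhds
  exact le_of_tendsto limit (eventually_mem_nhdsWithin.mono lower_bound)

section Subgradient

variable {E : Type*} [NormedAddCommGroup E] [InnerProductSpace ℝ E]
  {f : E → ℝ} {U : Set E} {x x₀ v v₀ : E}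

/-- `IsSubgradientOn f U x v`: the vector `v` is a subgradient at `x` of `f` restricted to `U`, what
the paper calls a subdifferential. The condition `x ∈ U` is not included. -/
def IsSubgradientOn (f : E → ℝ) (U : Set E) (x v : E) : Prop :=
  ∀ y ∈ U, f x + ⟪v, y - x⟫_ℝ ≤ f y

theorem exists_isSubgradientOn [CompleteSpace E] (hU : IsOpen U) (hf : ConvexOn ℝ U f)
    (hfc : ContinuousOn f U) (hx : x ∈ U) : ∃ v, IsSubgradientOn f U x v := by
  obtain ⟨l, hl⟩ := exists_dual_add_le_of_convexOn hU hf hfc hx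
  refine ⟨(InnerProductSpace.toDual ℝ E).symm l, fun y hy => ?_⟩
  simpa only [InnerProductSpace.toDual_symm_apply] using hl y hy

namespace IsSubgradientOn

theorem inner_sub_sub_nonneg (hv : IsSubgradientOn f U x v) (hv₀ : IsSubgradientOn f U x₀ v₀)
    (hx : x ∈ U) (hx₀ : x₀ ∈ U) : 0 ≤ ⟪v - v₀, x - x₀⟫_ℝ := by
  have at_x₀ := hv x₀ hx₀
  have at_x := hv₀ x hx
  rw [← neg_sub x x₀, inner_neg_right] at at_x₀
  rw [inner_sub_left]
  linarith

theorem neg_norm_mul_norm_le_inner (hv : IsSubgradientOn f U x v)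
    (hv₀ : IsSubgradientOn f U x₀ v₀) (hx : x ∈ U) (hx₀ : x₀ ∈ U) (a : E) :
    -(‖v - v₀ - a‖ * ‖x - x₀‖) ≤ ⟪a, x - x₀⟫_ℝ := by
  have monotone := hv.inner_sub_sub_nonneg hv₀ hx hx₀
  have cauchy_schwarz := real_inner_le_norm (v - v₀ - a) (x - x₀)
  rw [inner_sub_left] at cauchy_schwarz
  linarith

end IsSubgradientOn

theorem generalized_hessian_posSemidef_general [CompleteSpace E] (hU : IsOpen U)
    (hf : ConvexOn ℝ U f) (hfc : ContinuousOn f U) (hx₀ : x₀ ∈ U)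
    (hv₀ : IsSubgradientOn f U x₀ v₀) (A : E →ₗ[ℝ] E) {Θ : ℝ → ℝ}
    (hΘ : Tendsto Θ (𝓝[≥] 0) (𝓝 0)) {V : Set E} (hV : V ∈ 𝓝 x₀)
    (hgen : ∀ x ∈ V, ∀ v, IsSubgradientOn f U x v →
      ‖v - v₀ - A (x - x₀)‖ ≤ Θ ‖x - x₀‖ * ‖x - x₀‖) (w : E) :
    0 ≤ ⟪A w, w⟫_ℝ := by
  let Q : QuadraticForm ℝ E := LinearMap.BilinMap.toQuadraticMap (innerₗ E ∘ₗ A)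
  suffices ∀ ε > 0, ∀ᶠ u in 𝓝 0, -(ε * ‖u‖ ^ 2) ≤ Q u from
    quadraticForm_nonneg_of_eventually_neg_le Q this w
  intro ε hε
  have norm_tendsto : Tendsto (fun u : E => ‖u‖) (𝓝 0) (𝓝[≥] 0) :=
    tendsto_nhdsWithin_iff.2 ⟨tendsto_norm_zero, .of_forall norm_nonneg⟩
  have add_tendsto : Tendsto (fun u : E => x₀ + u) (𝓝 0) (𝓝 x₀) :=
    (continuous_const_add x₀).tendsto' 0 x₀ (add_zero x₀)
  filter_upwards [(hΘ.comp norm_tendsto).eventually_le_const hε, add_tendsto hV,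
    add_tendsto (hU.mem_nhds hx₀)] with u hΘu huV huU
  obtain ⟨v, hv⟩ := exists_isSubgradientOn hU hf hfc huU
  have remainder_le := hgen _ huV v hv
  have inner_ge := hv.neg_norm_mul_norm_le_inner hv₀ huU hx₀ (A u)
  rw [add_sub_cancel_left] at remainder_le inner_ge
  calc -(ε * ‖u‖ ^ 2) = -(ε * ‖u‖ * ‖u‖) := by ring
    _ ≤ -(‖v - v₀ - A u‖ * ‖u‖) := by
        gcongr
        exact remainder_le.trans (by gcongr; exact hΘu)
    _ ≤ ⟪A u, u⟫_ℝ := inner_ge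

end Subgradient

/-- If a convex function is twice differentiable in the generalized sense at a point,
then its generalized Hesse matrix is positive semidefinite. -/
theorem generalized_hessian_posSemidef {n : ℕ}
    (U : Set (EuclideanSpace ℝ (Fin n))) (hUconv : Convex ℝ U) (hUopen : IsOpen U)
    (f : EuclideanSpace ℝ (Fin n) → ℝ) (hf : ConvexOn ℝ U f)
    (x₀ : EuclideanSpace ℝ (Fin n)) (hx₀ : x₀ ∈ U)
    (v₀ : EuclideanSpace ℝ (Fin n)) (hv₀ : ∀ x ∈ U, f x₀ + ⟪v₀, x - x₀⟫_ℝ ≤ f x)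
    (A : EuclideanSpace ℝ (Fin n) →ₗ[ℝ] EuclideanSpace ℝ (Fin n))
    (Θ : ℝ → ℝ) (hΘmono : Monotone Θ)
    (hΘ0 : Filter.Tendsto Θ (nhdsWithin 0 (Set.Ici 0)) (nhds 0))
    (V : Set (EuclideanSpace ℝ (Fin n))) (hV : V ∈ nhds x₀) (hVU : V ⊆ U)
    (hgen : ∀ x ∈ V, ∀ v : EuclideanSpace ℝ (Fin n),
      (∀ y ∈ U, f x + ⟪v, y - x⟫_ℝ ≤ f y) →
      ‖v - v₀ - A (x - x₀)‖ ≤ Θ ‖x - x₀‖ * ‖x - x₀‖) :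
    ∀ w : EuclideanSpace ℝ (Fin n), 0 ≤ ⟪A w, w⟫_ℝ := by
  exact generalized_hessian_posSemidef_general hUopen hf (hf.continuousOn hUopen) hx₀ hv₀ A hΘ0 hV
    hgen
end

section
/- Let K be a convex body in ℝⁿ, let t ≥ 0, and let K_t denote its convex floating body. Let T : ℝⁿ → ℝⁿ be an invertible affine map, T(x) = Lx + b with L ∈ GL(n,ℝ). Then (T(K))_t = T(K_{t/|det L|}). -/
/-!
A closed halfspace is `{f ≤ 0}` for a nonconstant affine function `f`, and rescaling `f` by a
positive factor changes neither the halfspace nor its complement. The floating body can therefore be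
described by nonconstant affine functions alone, without unit normals. In that description an affine
bijection `T` acts by precomposition `f ↦ f ∘ T`, which permutes the nonconstant affine functions,
and the cap cut off from `T K` by `f` is the image under `T` of the cap cut off from `K` by `f ∘ T`,
so its volume is scaled by the absolute determinant of the linear part of `T`.
-/

open scoped InnerProductSpace

/-- The convex floating body `K_t`: the intersection of all closed halfspaces
`{x : ⟪x,u⟫ ≤ c}` (with `u` a unit vector) such that the complementary halfspace
cuts off a set of volume `t` from `K`. -/
noncomputable def floatingBody {n : ℕ} (K : Set (EuclideanSpace ℝ (Fin n))) (t : ℝ) :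
    Set (EuclideanSpace ℝ (Fin n)) :=
  ⋂ (u : EuclideanSpace ℝ (Fin n)) (_ : ‖u‖ = 1) (c : ℝ)
    (_ : MeasureTheory.volume (K ∩ {x | c ≤ ⟪x, u⟫_ℝ}) = ENNReal.ofReal t),
    {x | ⟪x, u⟫_ℝ ≤ c}

open MeasureTheory
open scoped ENNReal NNReal

section AffineSpace

variable {V W P Q : Type*} [AddCommGroup V] [Module ℝ V] [AddTorsor V P] [MeasurableSpace P]
  [AddCommGroup W] [Module ℝ W] [AddTorsor W Q] [MeasurableSpace Q]

/-- The convex floating body in coordinate-free form, for a measure `μ` on a real affine space: the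
halfspaces are `{f ≤ 0}` with `f` affine and nonconstant, and the complementary closed halfspace
`{0 ≤ f}` cuts off a set of measure `s` from `K`. -/
def affineFloatingBody (μ : Measure P) (K : Set P) (s : ℝ≥0∞) : Set P :=
  {x | ∀ f : P →ᵃ[ℝ] ℝ, f.linear ≠ 0 → μ (K ∩ {y | 0 ≤ f y}) = s → f x ≤ 0}

theorem affineFloatingBody_image {μ : Measure P} {ν : Measure Q} (T : P ≃ᵃ[ℝ] Q) {r : ℝ≥0∞}
    (hr : r ≠ 0) (hr' : r ≠ ∞) (hT : ∀ S, ν (T '' S) = r * μ S) (K : Set P) (s : ℝ≥0∞) :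
    affineFloatingBody ν (T '' K) (r * s) = T '' affineFloatingBody μ K s := by
  have comp_surjective : Function.Surjective fun f : Q →ᵃ[ℝ] ℝ => f.comp (T : P →ᵃ[ℝ] Q) :=
    (T.arrowCongrEquiv (AffineEquiv.refl ℝ ℝ)).symm.surjective
  have linear_comp_eq_zero (f : Q →ᵃ[ℝ] ℝ) :
      (f.comp (T : P →ᵃ[ℝ] Q)).linear = 0 ↔ f.linear = 0 := by
    rw [AffineMap.comp_linear, ← LinearMap.zero_comp (T : P →ᵃ[ℝ] Q).linear]
    exact LinearMap.cancel_right T.linear.surjective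
  have measure_cap (f : Q →ᵃ[ℝ] ℝ) : ν (T '' K ∩ {y | 0 ≤ f y}) =
      r * μ (K ∩ {x | 0 ≤ f (T x)}) := by
    rw [← Set.image_inter_preimage, hT, Set.preimage_ofPred_eq]
  ext y
  obtain ⟨x, rfl⟩ := T.surjective y
  rw [T.injective.mem_set_image]
  simp only [affineFloatingBody, Set.mem_ofPred_eq, comp_surjective.forall, ne_eq,
    linear_comp_eq_zero, measure_cap, ENNReal.mul_right_inj hr hr', AffineMap.comp_apply,
    AffineEquiv.coe_coe]

end AffineSpace

theorem addHaar_image_affineEquiv {E : Type*} [NormedAddCommGroup E] [NormedSpace ℝ E]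
    [FiniteDimensional ℝ E] [MeasurableSpace E] [BorelSpace E] (μ : Measure E) [μ.IsAddHaarMeasure]
    (T : E ≃ᵃ[ℝ] E) (S : Set E) :
    μ (T '' S) = ENNReal.ofReal |LinearMap.det (T.linear : E →ₗ[ℝ] E)| * μ S := by
  have hT : ⇑T = (· + T 0) ∘ (T.linear : E →ₗ[ℝ] E) := AffineMap.decomp (T : E →ᵃ[ℝ] E)
  rw [hT, Set.image_comp, Set.image_add_right, measure_preimage_add_right,
    Measure.addHaar_image_linearMap]

theorem exists_unit_normal_of_linear_ne_zero {E : Type*} [NormedAddCommGroup E]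
    [InnerProductSpace ℝ E] [FiniteDimensional ℝ E] {f : E →ᵃ[ℝ] ℝ} (hf : f.linear ≠ 0) :
    ∃ u : E, ‖u‖ = 1 ∧ ∃ r c : ℝ, 0 < r ∧ ∀ x, f x = r * (⟪x, u⟫_ℝ - c) := by
  obtain ⟨v, hv⟩ : ∃ v : E, ∀ x, f.linear x = ⟪x, v⟫_ℝ :=
    ⟨(InnerProductSpace.toDual ℝ E).symm f.linear.toContinuousLinearMap, fun x => by
      rw [real_inner_comm, InnerProductSpace.toDual_symm_apply,
        LinearMap.coe_toContinuousLinearMap']⟩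
  have hv₀ : v ≠ 0 := by
    rintro rfl
    exact hf (LinearMap.ext fun x => by simp [hv])
  have norm_ne : ‖v‖ ≠ 0 := norm_ne_zero_iff.2 hv₀
  refine ⟨‖v‖⁻¹ • v, norm_smul_inv_norm (𝕜 := ℝ) hv₀, ‖v‖, -(‖v‖⁻¹ * f 0),
    norm_pos_iff.2 hv₀, fun x => ?_⟩
  calc f x = f.linear x + f 0 := congrFun f.decomp x
    _ = ‖v‖ * (⟪x, ‖v‖⁻¹ • v⟫_ℝ - -(‖v‖⁻¹ * f 0)) := by
      rw [hv, real_inner_smul_right]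
      field_simp
      ring

theorem floatingBody_eq_affineFloatingBody {n : ℕ} (K : Set (EuclideanSpace ℝ (Fin n))) (t : ℝ) :
    floatingBody K t = affineFloatingBody volume K (ENNReal.ofReal t) := by
  ext x
  simp only [floatingBody, affineFloatingBody, Set.mem_iInter, Set.mem_ofPred_eq]
  constructor
  · intro h f hf hcap
    obtain ⟨u, hu, r, c, hr, hfr⟩ := exists_unit_normal_of_linear_ne_zero hf
    simp only [hfr, mul_nonneg_iff_of_pos_left hr, sub_nonneg] at hcap
    rw [hfr]
    exact mul_nonpos_of_nonneg_of_nonpos hr.le (sub_nonpos.2 (h u hu c hcap))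
  · intro h u hu c hcap
    let f : EuclideanSpace ℝ (Fin n) →ᵃ[ℝ] ℝ :=
      (innerₗ _ u).toAffineMap - AffineMap.const ℝ _ c
    have hfx (y) : f y = ⟪y, u⟫_ℝ - c := by simp [f, real_inner_comm]
    have hf : f.linear ≠ 0 := fun h₀ => by
      have : ⟪u, u⟫_ℝ = 0 := by simpa [f] using LinearMap.congr_fun h₀ u
      simp [hu] at this
    simpa only [hfx, sub_nonpos] using h f hf (by simpa only [hfx, sub_nonneg] using hcap)

theorem floatingBody_affine_image_general {n : ℕ} (K : Set (EuclideanSpace ℝ (Fin n))) (t : ℝ≥0)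
    (T : EuclideanSpace ℝ (Fin n) ≃ᵃ[ℝ] EuclideanSpace ℝ (Fin n)) :
    floatingBody (T '' K) t = T '' floatingBody K (t / |LinearMap.det
      (T.linear : EuclideanSpace ℝ (Fin n) →ₗ[ℝ] EuclideanSpace ℝ (Fin n))|) := by
  set d := |LinearMap.det (T.linear : EuclideanSpace ℝ (Fin n) →ₗ[ℝ] EuclideanSpace ℝ (Fin n))|
  have hd : 0 < d := abs_pos.2 T.linear.isUnit_det'.ne_zero
  have ofReal_t : ENNReal.ofReal t = ENNReal.ofReal d * ENNReal.ofReal (t / d) := by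
    rw [← ENNReal.ofReal_mul hd.le, mul_div_cancel₀ _ hd.ne']
  rw [floatingBody_eq_affineFloatingBody, floatingBody_eq_affineFloatingBody, ofReal_t]
  exact affineFloatingBody_image T (ENNReal.ofReal_pos.2 hd).ne' ENNReal.ofReal_ne_top
    (addHaar_image_affineEquiv volume T) K _

/-- Affine equivariance of the convex floating body:
`(T K)_t = T (K_{t/|det L|})` for an invertible affine map `T x = L x + b`. -/
theorem floatingBody_affine_image {n : ℕ}
    (K : Set (EuclideanSpace ℝ (Fin n))) (hKcomp : IsCompact K) (hKconv : Convex ℝ K)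
    (hKint : (interior K).Nonempty) (t : ℝ) (ht : 0 ≤ t)
    (L : EuclideanSpace ℝ (Fin n) ≃ₗ[ℝ] EuclideanSpace ℝ (Fin n))
    (b : EuclideanSpace ℝ (Fin n)) :
    floatingBody ((fun x => L x + b) '' K) t
      = (fun x => L x + b) ''
          floatingBody K (t / |LinearMap.det (L : EuclideanSpace ℝ (Fin n) →ₗ[ℝ]
            EuclideanSpace ℝ (Fin n))|) :=
  floatingBody_affine_image_general K ⟨t, ht⟩ (L.toAffineEquiv.trans (.vaddConst ℝ b))
end

section
/- Let K be a convex body in ℝⁿ and let r : ∂K → ℝ be its rolling function. Then r is upper semicontinuous on ∂K. -/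
/-- The rolling function of a convex body `K`:
`r(x) = sup {‖x − z‖ : z ∈ K and the closed ball around z of radius ‖x − z‖ is in K}`. -/
noncomputable def rollingFunction {n : ℕ} (K : Set (EuclideanSpace ℝ (Fin n)))
    (x : EuclideanSpace ℝ (Fin n)) : ℝ :=
  sSup {d : ℝ | ∃ z ∈ K, d = ‖x - z‖ ∧ Metric.closedBall z ‖x - z‖ ⊆ K}

/-! The centres admissible for `x` form a compact set whose graph, as `x` varies, is closed:
`closedBall z ‖x - z‖ ⊆ K` says that `z + ‖x - z‖ • u ∈ K` for every `u` in the unit ball, and each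
of these conditions is closed in `(x, z)`. Upper semicontinuity of the maximal radius is then the
upper half of Berge's maximum theorem. -/

open Metric Set Topology
open scoped NNReal

theorem upperSemicontinuousOn_sSup_image_of_isClosed_graph {X Y α : Type*}
    [TopologicalSpace X] [TopologicalSpace Y] [ConditionallyCompleteLinearOrder α]
    [TopologicalSpace α] [ClosedIciTopology α]
    {K : Set Y} (hK : IsCompact K) {Φ : X → Set Y} (hΦ : IsClosed {p : X × Y | p.2 ∈ Φ p.1})
    {S : Set X} (hΦK : ∀ x ∈ S, Φ x ⊆ K) (hΦS : ∀ x ∈ S, (Φ x).Nonempty)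
    {f : X → Y → α} (hf : Continuous ↿f) :
    UpperSemicontinuousOn (fun x ↦ sSup (f x '' Φ x)) S := by
  intro x hx c hc
  have sSup_lt_iff : ∀ a ∈ S, sSup (f a '' Φ a) < c ↔ ∀ z ∈ Φ a, f a z < c := fun a ha ↦
    (hK.of_isClosed_subset (hΦ.preimage (.prodMk_right a)) (hΦK a ha)).sSup_lt_iff_of_continuous
      (hΦS a ha) (hf.comp (.prodMk_right a)).continuousOn c
  have isOpen_imp_lt : IsOpen {p : X × Y | p.2 ∈ Φ p.1 → f p.1 p.2 < c} := by
    simpa only [imp_iff_not_or] using! hΦ.isOpen_compl.union (isOpen_Iio.preimage hf)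
  have eventually_lt : ∀ᶠ a in 𝓝 x, ∀ z ∈ K, z ∈ Φ a → f a z < c :=
    hK.eventually_forall_of_forall_eventually fun z _ ↦
      isOpen_imp_lt.mem_nhds ((sSup_lt_iff x hx).1 hc z)
  filter_upwards [eventually_lt.filter_mono nhdsWithin_le_nhds, self_mem_nhdsWithin] with a ha haS
  exact (sSup_lt_iff a haS).2 fun z hz ↦ ha z (hΦK a haS hz) hz

section RollingCenters

variable {E : Type*} [NormedAddCommGroup E]

theorem isClosed_setOf_closedBall_subset [NormedSpace ℝ E] {K : Set E} (hK : IsClosed K) :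
    IsClosed {p : E × ℝ≥0 | closedBall p.1 p.2 ⊆ K} := by
  have closedBall_subset_iff (p : E × ℝ≥0) :
      closedBall p.1 p.2 ⊆ K ↔ ∀ u ∈ closedBall (0 : E) 1, p.1 + p.2 • u ∈ K := by
    rw [← affinity_unitClosedBall p.2.coe_nonneg p.1, ← image_smul, ← image_vadd, image_image,
      image_subset_iff]
    rfl
  simp only [closedBall_subset_iff, ofPred_forall]
  exact isClosed_biInter fun u _ ↦ hK.preimage (by fun_prop)

/-- The admissible centres in the definition of the rolling function at `x`: the centres of the
balls contained in `K` whose bounding sphere passes through `x`. The radius `0` is allowed. -/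
def rollingCenters (K : Set E) (x : E) : Set E :=
  {z ∈ K | closedBall z ‖x - z‖ ⊆ K}

theorem self_mem_rollingCenters {K : Set E} {x : E} (hx : x ∈ K) : x ∈ rollingCenters K x :=
  ⟨hx, by simpa only [sub_self, norm_zero, closedBall_zero, singleton_subset_iff] using hx⟩

theorem isClosed_graph_rollingCenters [NormedSpace ℝ E] {K : Set E} (hK : IsClosed K) :
    IsClosed {p : E × E | p.2 ∈ rollingCenters K p.1} :=
  (hK.preimage continuous_snd).inter <|
    (isClosed_setOf_closedBall_subset hK).preimage
      (f := fun p : E × E ↦ (p.2, ‖p.1 - p.2‖₊)) (by fun_prop)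

end RollingCenters

theorem rollingFunction_eq_sSup_image {n : ℕ} (K : Set (EuclideanSpace ℝ (Fin n)))
    (x : EuclideanSpace ℝ (Fin n)) :
    rollingFunction K x = sSup ((fun z ↦ ‖x - z‖) '' rollingCenters K x) := by
  refine congrArg sSup (Set.ext fun d ↦ exists_congr fun z ↦ ?_)
  simp only [rollingCenters, mem_ofPred_eq, and_assoc, eq_comm (a := d),
    and_comm (a := ‖x - z‖ = d)]

theorem rollingFunction_upperSemicontinuousOn_general {n : ℕ}
    {K : Set (EuclideanSpace ℝ (Fin n))} (hK : IsCompact K) :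
    UpperSemicontinuousOn (rollingFunction K) K := by
  rw [funext (rollingFunction_eq_sSup_image K)]
  exact upperSemicontinuousOn_sSup_image_of_isClosed_graph hK
    (isClosed_graph_rollingCenters hK.isClosed) (fun _ _ ↦ sep_subset _ _)
    (fun x hx ↦ ⟨x, self_mem_rollingCenters hx⟩) (continuous_fst.sub continuous_snd).norm

/-- The rolling function of a convex body is upper semicontinuous on the boundary. -/
theorem rollingFunction_upperSemicontinuousOn {n : ℕ}
    (K : Set (EuclideanSpace ℝ (Fin n))) (hKcomp : IsCompact K) (hKconv : Convex ℝ K)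
    (hKint : (interior K).Nonempty) :
    UpperSemicontinuousOn (rollingFunction K) (frontier K) :=
  (rollingFunction_upperSemicontinuousOn_general hKcomp).mono hKcomp.isClosed.frontier_subset
end

section
/- Let K ⊆ ℝ² be the convex hull of the compact set {(0,0)} ∪ {(1/n, 1/n²) : n ∈ ℕ, n ≥ 1} ∪ {(−1/n, 1/n²) : n ∈ ℕ, n ≥ 1}, and let r be its rolling function. Then for every n ≥ 1 the point (1/n, 1/n²) belongs to ∂K and r((1/n, 1/n²)) = 0, while (0,0) ∈ ∂K and r((0,0)) ≥ 1/2. In particular, r is not continuous at (0,0). -/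
/-- The point `(a, b)` of the Euclidean plane. -/
noncomputable def pt (a b : ℝ) : EuclideanSpace ℝ (Fin 2) :=
  (WithLp.equiv 2 (Fin 2 → ℝ)).symm ![a, b]

open Set Filter Topology RealInnerProductSpace

lemma add_smul_mem_of_mem_Icc {𝕜 E : Type*} [Field 𝕜] [LinearOrder 𝕜] [IsStrictOrderedRing 𝕜]
    [AddCommGroup E] [Module 𝕜 E] {K : Set E} (hK : Convex 𝕜 K) {x y : E} {a b t : 𝕜}
    (ha : x + a • y ∈ K) (hb : x + b • y ∈ K) (ht : t ∈ Icc a b) : x + t • y ∈ K :=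
  ((hK.translate_preimage_right x).linear_preimage
    (LinearMap.toSpanSingleton 𝕜 E y)).ordConnected.out ha hb ht

section InnerProductSpace

variable {E : Type*} [NormedAddCommGroup E] [InnerProductSpace ℝ E] {K : Set E} {m m₁ m₂ x z : E}

lemma mem_frontier_of_forall_inner_le (hx : x ∈ K) (hm : m ≠ 0) (h : ∀ v ∈ K, ⟪m, x⟫ ≤ ⟪m, v⟫) :
    x ∈ frontier K := by
  refine ⟨subset_closure hx, fun hint => hm ?_⟩
  have hmin : IsLocalMin (innerSL ℝ m) x :=
    IsMinOn.isLocalMin (s := K) h (mem_interior_iff_mem_nhds.1 hint)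
  have hzero : innerSL ℝ m = 0 := hmin.hasFDerivAt_eq_zero (innerSL ℝ m).hasFDerivAt
  simpa using congr($hzero m)

lemma sameRay_sub_of_forall_closedBall_inner_le
    (h : ∀ v ∈ Metric.closedBall z ‖x - z‖, ⟪m, x⟫ ≤ ⟪m, v⟫) : SameRay ℝ m (z - x) := by
  rcases eq_or_ne m 0 with rfl | hm
  · exact SameRay.zero_left _
  have hm' : ‖m‖ ≠ 0 := norm_ne_zero_iff.2 hm
  -- `⟪m, ·⟫` attains its minimum over the ball at this point
  have hlow := h (z - (‖x - z‖ / ‖m‖) • m) (by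
    rw [Metric.mem_closedBall, dist_eq_norm, sub_sub_cancel_left, norm_neg, norm_smul,
      Real.norm_of_nonneg (by positivity), div_mul_cancel₀ _ hm'])
  have hinner : ⟪m, z - (‖x - z‖ / ‖m‖) • m⟫ = ⟪m, z⟫ - ‖m‖ * ‖z - x‖ := by
    rw [inner_sub_right, real_inner_smul_right, real_inner_self_eq_norm_sq, norm_sub_rev x z]
    field_simp
  have heq : ⟪m, z - x⟫ = ‖m‖ * ‖z - x‖ :=
    le_antisymm (real_inner_le_norm _ _) (by rw [inner_sub_right]; linarith)
  exact sameRay_iff_norm_smul_eq.2 (inner_eq_norm_mul_iff_real.1 heq).symm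

lemma eq_of_closedBall_subset_of_not_sameRay (hm : ¬ SameRay ℝ m₁ m₂)
    (h₁ : ∀ v ∈ K, ⟪m₁, x⟫ ≤ ⟪m₁, v⟫) (h₂ : ∀ v ∈ K, ⟪m₂, x⟫ ≤ ⟪m₂, v⟫)
    (hz : Metric.closedBall z ‖x - z‖ ⊆ K) : z = x := by
  have ray₁ := sameRay_sub_of_forall_closedBall_inner_le fun v hv => h₁ v (hz hv)
  have ray₂ := sameRay_sub_of_forall_closedBall_inner_le fun v hv => h₂ v (hz hv)
  by_contra hne
  exact hm (ray₁.trans ray₂.symm fun h0 => absurd (sub_eq_zero.1 h0) hne)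

end InnerProductSpace

section RollingFunction

variable {n : ℕ} {K : Set (EuclideanSpace ℝ (Fin n))} {x z m₁ m₂ : EuclideanSpace ℝ (Fin n)}

lemma rollingFunction_eq_zero_of_not_sameRay (hx : x ∈ K) (hm : ¬ SameRay ℝ m₁ m₂)
    (h₁ : ∀ v ∈ K, ⟪m₁, x⟫ ≤ ⟪m₁, v⟫) (h₂ : ∀ v ∈ K, ⟪m₂, x⟫ ≤ ⟪m₂, v⟫) :
    rollingFunction K x = 0 := by
  have hset : {d : ℝ | ∃ z ∈ K, d = ‖x - z‖ ∧ Metric.closedBall z ‖x - z‖ ⊆ K} = {0} := by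
    refine Subset.antisymm ?_ (singleton_subset_iff.2 ⟨x, hx, by simp, by simpa using hx⟩)
    rintro d ⟨z, -, rfl, hz⟩
    simp [eq_of_closedBall_subset_of_not_sameRay hm h₁ h₂ hz]
  rw [rollingFunction, hset, csSup_singleton]

lemma norm_sub_le_rollingFunction (hK : Bornology.IsBounded K)
    (hz : Metric.closedBall z ‖x - z‖ ⊆ K) : ‖x - z‖ ≤ rollingFunction K x := by
  obtain ⟨C, hC⟩ := hK.exists_norm_le
  refine le_csSup ⟨‖x‖ + C, ?_⟩ ⟨z, hz (Metric.mem_closedBall_self (norm_nonneg _)), rfl, hz⟩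
  rintro d ⟨y, hy, rfl, -⟩
  exact (norm_sub_le x y).trans (by gcongr; exact hC y hy)

end RollingFunction

section Plane

lemma pt_apply_zero (a b : ℝ) : pt a b 0 = a := rfl

lemma pt_apply_one (a b : ℝ) : pt a b 1 = b := rfl

lemma pt_eta (v : EuclideanSpace ℝ (Fin 2)) : pt (v 0) (v 1) = v := by
  ext i; fin_cases i <;> rfl

lemma pt_add_smul_pt (a b c d t : ℝ) : pt a b + t • pt c d = pt (a + t * c) (b + t * d) := by
  ext i; fin_cases i <;> rfl

lemma inner_pt (a b : ℝ) (v : EuclideanSpace ℝ (Fin 2)) : ⟪pt a b, v⟫ = a * v 0 + b * v 1 := by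
  simp [PiLp.inner_apply, Fin.sum_univ_two, pt_apply_zero, pt_apply_one, mul_comm]

lemma pt_one_ne_zero (a : ℝ) : pt a 1 ≠ 0 := fun h =>
  one_ne_zero (congr($h 1) : (1 : ℝ) = 0)

lemma eq_of_sameRay_pt_one {a b : ℝ} (h : SameRay ℝ (pt a 1) (pt b 1)) : a = b := by
  obtain ⟨r, s, hr, -, hrs⟩ := h.exists_pos (pt_one_ne_zero a) (pt_one_ne_zero b)
  have h0 : r * a = s * b := congr($hrs 0)
  have h1 : r * 1 = s * 1 := congr($hrs 1)
  have hsr : s = r := by linarith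
  exact mul_left_cancel₀ hr.ne' (hsr ▸ h0)

lemma mem_closedBall_pt_zero_half {v : EuclideanSpace ℝ (Fin 2)} :
    v ∈ Metric.closedBall (pt 0 (1 / 2)) (1 / 2) ↔ v 0 ^ 2 + v 1 ^ 2 ≤ v 1 := by
  rw [Metric.mem_closedBall, dist_eq_norm, ← sq_le_sq₀ (norm_nonneg _) (by norm_num),
    EuclideanSpace.real_norm_sq_eq, Fin.sum_univ_two]
  simp only [PiLp.sub_apply, pt_apply_zero, pt_apply_one]
  constructor <;> intro h <;> linarith

end Plane

section Parabola

/-- The point of abscissa `t` on the parabola `y = x²`. -/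
noncomputable def parabolaPoint (t : ℝ) : EuclideanSpace ℝ (Fin 2) := pt t (t ^ 2)

/-- The convex hull of the points of the parabola `y = x²` with abscissa in `A`. -/
noncomputable def parabolaHull (A : Set ℝ) : Set (EuclideanSpace ℝ (Fin 2)) :=
  convexHull ℝ (parabolaPoint '' A)

variable {A : Set ℝ} {K : Set (EuclideanSpace ℝ (Fin 2))} {a b t u v : ℝ}

lemma continuous_parabolaPoint : Continuous parabolaPoint := by
  unfold parabolaPoint pt
  exact (PiLp.continuous_toLp 2 _).comp (by fun_prop)

lemma parabolaPoint_mem_parabolaHull (ht : t ∈ A) : parabolaPoint t ∈ parabolaHull A :=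
  subset_convexHull ℝ _ (mem_image_of_mem _ ht)

lemma isBounded_parabolaHull (hA : Bornology.IsBounded A) :
    Bornology.IsBounded (parabolaHull A) :=
  isBounded_convexHull.2 <| (hA.isCompact_closure.image continuous_parabolaPoint).isBounded.subset
    (image_mono subset_closure)

lemma inner_chord_normal_parabolaPoint (a b t : ℝ) :
    ⟪pt (-(a + b)) 1, parabolaPoint t⟫ = (t - a) * (t - b) - a * b := by
  rw [inner_pt, parabolaPoint, pt_apply_zero, pt_apply_one]; ring

lemma inner_chord_normal_le_of_mem_parabolaHull (hab : a ≤ b) (hA : Disjoint (Ioo a b) A)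
    (ht : t = a ∨ t = b) :
    ∀ v ∈ parabolaHull A, ⟪pt (-(a + b)) 1, parabolaPoint t⟫ ≤ ⟪pt (-(a + b)) 1, v⟫ := by
  refine convexHull_min ?_ (convex_halfSpace_ge (innerₛₗ ℝ _).isLinear _)
  rintro _ ⟨s, hs, rfl⟩
  have houtside : s ≤ a ∨ b ≤ s := by
    simpa only [mem_Ioo, not_and_or, not_lt] using disjoint_right.1 hA hs
  have hnonneg : 0 ≤ (s - a) * (s - b) := by
    rcases houtside with h | h
    · exact mul_nonneg_of_nonpos_of_nonpos (by linarith) (by linarith)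
    · exact mul_nonneg (by linarith) (by linarith)
  have hzero : (t - a) * (t - b) = 0 := by simpa only [mul_eq_zero, sub_eq_zero] using ht
  change _ ≤ ⟪pt (-(a + b)) 1, parabolaPoint s⟫
  rw [inner_chord_normal_parabolaPoint, inner_chord_normal_parabolaPoint]
  linarith

lemma parabolaPoint_mem_frontier (ht : t ∈ A) : parabolaPoint t ∈ frontier (parabolaHull A) :=
  mem_frontier_of_forall_inner_le (parabolaPoint_mem_parabolaHull ht) (pt_one_ne_zero _)
    (inner_chord_normal_le_of_mem_parabolaHull le_rfl (by simp) (Or.inl rfl))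

lemma rollingFunction_parabolaPoint_of_isolated (ht : t ∈ A) (hiso : ∀ᶠ s in 𝓝 t, s ∈ A → s = t) :
    rollingFunction (parabolaHull A) (parabolaPoint t) = 0 := by
  obtain ⟨a, b, ⟨hat, htb⟩, hab⟩ := mem_nhds_iff_exists_Ioo_subset.1 hiso
  have hleft : Disjoint (Ioo a t) A :=
    disjoint_left.2 fun s hs hsA => hs.2.ne (hab ⟨hs.1, hs.2.trans htb⟩ hsA)
  have hright : Disjoint (Ioo t b) A :=
    disjoint_left.2 fun s hs hsA => hs.1.ne' (hab ⟨hat.trans hs.1, hs.2⟩ hsA)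
  have hnormals : ¬ SameRay ℝ (pt (-(a + t)) 1) (pt (-(t + b)) 1) := fun h => by
    linarith [eq_of_sameRay_pt_one h]
  exact rollingFunction_eq_zero_of_not_sameRay (parabolaPoint_mem_parabolaHull ht) hnormals
    (inner_chord_normal_le_of_mem_parabolaHull hat.le hleft (Or.inr rfl))
    (inner_chord_normal_le_of_mem_parabolaHull htb.le hright (Or.inl rfl))

lemma pt_chord_mem (hK : Convex ℝ K) (ha : parabolaPoint a ∈ K) (hb : parabolaPoint b ∈ K)
    (hu : u ∈ Icc a b) : pt u ((a + b) * u - a * b) ∈ K := by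
  have hline (s : ℝ) : pt 0 (-(a * b)) + s • pt 1 (a + b) = pt s ((a + b) * s - a * b) := by
    rw [pt_add_smul_pt]; ring_nf
  have ha' : pt 0 (-(a * b)) + a • pt 1 (a + b) = parabolaPoint a := by
    rw [hline, parabolaPoint]; ring_nf
  have hb' : pt 0 (-(a * b)) + b • pt 1 (a + b) = parabolaPoint b := by
    rw [hline, parabolaPoint]; ring_nf
  exact hline u ▸ add_smul_mem_of_mem_Icc hK (ha'.symm ▸ ha) (hb'.symm ▸ hb) hu

lemma pt_mem_of_chord_le (hK : Convex ℝ K) (hneg : parabolaPoint (-1) ∈ K)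
    (hone : parabolaPoint 1 ∈ K) (ha : parabolaPoint a ∈ K) (hb : parabolaPoint b ∈ K)
    (hu : u ∈ Icc a b) (hu1 : u ∈ Icc (-1) 1) (hchord : (a + b) * u - a * b ≤ v) (hv : v ≤ 1) :
    pt u v ∈ K := by
  have htop : pt u 1 ∈ K := by simpa using pt_chord_mem hK hneg hone hu1
  have hvert (s : ℝ) : pt u 0 + s • pt 0 1 = pt u s := by simp [pt_add_smul_pt]
  exact hvert v ▸ add_smul_mem_of_mem_Icc hK ((hvert _).symm ▸ pt_chord_mem hK ha hb hu)
    ((hvert 1).symm ▸ htop) ⟨hchord, hv⟩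

lemma chord_le_of_sq_add_sq_le (hab : |a - b| ≤ 2 * (a * b)) (h : u ^ 2 + v ^ 2 ≤ v) :
    (a + b) * u - a * b ≤ v := by
  have hpos : 0 ≤ a * b := by linarith [abs_nonneg (a - b)]
  -- the point `(0, 1/2)` has distance at least `1/2` from the line `y = (a + b) x - a b`
  have hnormal : (a + b) ^ 2 + 1 ≤ (2 * (a * b) + 1) ^ 2 := by
    linarith [sq_le_sq' (neg_le_of_abs_le hab) (le_of_abs_le hab)]
  have hdisc : 4 * (u ^ 2 + (v - 1 / 2) ^ 2) ≤ 1 := by linarith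
  -- Cauchy–Schwarz for the vectors `(a + b, -1)` and `(u, v - 1/2)`
  have hcs : (2 * ((a + b) * u - (v - 1 / 2))) ^ 2 ≤ (2 * (a * b) + 1) ^ 2 := calc
    _ ≤ ((a + b) ^ 2 + 1) * (4 * (u ^ 2 + (v - 1 / 2) ^ 2)) := by
      linarith [sq_nonneg ((a + b) * (v - 1 / 2) + u)]
    _ ≤ (a + b) ^ 2 + 1 := mul_le_of_le_one_right (by positivity) hdisc
    _ ≤ _ := hnormal
  linarith [le_of_sq_le_sq hcs (by linarith)]

lemma closedBall_subset_parabolaHull (hneg : -1 ∈ A) (hone : 1 ∈ A)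
    (hA : ∀ u ∈ Icc (-1 : ℝ) 1, ∃ a ∈ A, ∃ b ∈ A, u ∈ Icc a b ∧ |a - b| ≤ 2 * (a * b)) :
    Metric.closedBall (pt 0 (1 / 2)) (1 / 2) ⊆ parabolaHull A := by
  intro p hp
  rw [mem_closedBall_pt_zero_half] at hp
  have hp0 : p 0 ∈ Icc (-1) 1 := abs_le.1 (abs_le_one_iff_mul_self_le_one.2 (by
    linarith [sq_nonneg (p 1 - 1 / 2)]))
  have hp1 : p 1 ≤ 1 := by nlinarith [sq_nonneg (p 0)]
  obtain ⟨a, ha, b, hb, hu, hab⟩ := hA (p 0) hp0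
  rw [← pt_eta p]
  exact pt_mem_of_chord_le (convex_convexHull ℝ _) (parabolaPoint_mem_parabolaHull hneg)
    (parabolaPoint_mem_parabolaHull hone) (parabolaPoint_mem_parabolaHull ha)
    (parabolaPoint_mem_parabolaHull hb) hu hp0 (chord_le_of_sq_add_sq_le hab hp) hp1

lemma half_le_rollingFunction_parabolaPoint_zero (hbdd : Bornology.IsBounded A)
    (hball : Metric.closedBall (pt 0 (1 / 2)) (1 / 2) ⊆ parabolaHull A) :
    1 / 2 ≤ rollingFunction (parabolaHull A) (parabolaPoint 0) := by
  have hnorm : ‖parabolaPoint 0 - pt 0 (1 / 2)‖ = 1 / 2 := by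
    rw [EuclideanSpace.norm_eq, Fin.sum_univ_two]
    norm_num [parabolaPoint, pt_apply_zero, pt_apply_one]
  exact hnorm.symm.trans_le <|
    norm_sub_le_rollingFunction (isBounded_parabolaHull hbdd) (by rwa [hnorm])

end Parabola

section IntInverses

/-- The inverses of the integers, as real numbers: the abscissas of the points spanning the convex
body of the example. Since `0⁻¹ = 0`, the integer `0` contributes the origin. -/
def intInverses : Set ℝ := range fun k : ℤ => (k : ℝ)⁻¹

lemma int_inv_mem_intInverses (k : ℤ) : (k : ℝ)⁻¹ ∈ intInverses := mem_range_self k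

lemma nat_inv_mem_intInverses (n : ℕ) : (n : ℝ)⁻¹ ∈ intInverses := by
  simpa using int_inv_mem_intInverses n

lemma neg_mem_intInverses {t : ℝ} (ht : t ∈ intInverses) : -t ∈ intInverses := by
  obtain ⟨k, rfl⟩ := ht
  exact ⟨-k, by simp [inv_neg]⟩

lemma isBounded_intInverses : Bornology.IsBounded intInverses := by
  refine isBounded_iff_forall_norm_le.2 ⟨1, ?_⟩
  rintro _ ⟨k, rfl⟩
  rw [norm_inv, Real.norm_eq_abs, ← Int.cast_abs, ← Nat.cast_natAbs]
  exact Nat.cast_inv_le_one _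

lemma eventually_eq_int_inv {k : ℤ} (hk : k ≠ 0) :
    ∀ᶠ s in 𝓝 (k : ℝ)⁻¹, s ∈ intInverses → s = (k : ℝ)⁻¹ := by
  have hinv : Tendsto (fun s : ℝ => s⁻¹) (𝓝 (k : ℝ)⁻¹) (𝓝 k) := by
    simpa using tendsto_inv₀ (inv_ne_zero (Int.cast_ne_zero.2 hk) : (k : ℝ)⁻¹ ≠ 0)
  filter_upwards [hinv (Metric.ball_mem_nhds _ one_pos)]
  rintro _ hs ⟨j, rfl⟩
  have hjk : |j - k| < 1 := by
    rw [mem_preimage, inv_inv, Metric.mem_ball, Real.dist_eq] at hs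
    exact_mod_cast hs
  rw [sub_eq_zero.1 (Int.abs_lt_one_iff.1 hjk)]

lemma exists_nat_inv_le_le {u : ℝ} (h0 : 0 < u) (h1 : u ≤ 1) :
    ∃ n : ℕ, 0 < n ∧ ((n : ℝ) + 1)⁻¹ ≤ u ∧ u ≤ (n : ℝ)⁻¹ := by
  have hn : 0 < ⌊u⁻¹⌋₊ := Nat.floor_pos.2 ((one_le_inv₀ h0).2 h1)
  refine ⟨⌊u⁻¹⌋₊, hn, ?_, ?_⟩
  · exact inv_le_of_inv_le₀ h0 (Nat.lt_floor_add_one _).le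
  · exact (le_inv_comm₀ (Nat.cast_pos.2 hn) h0).1 (Nat.floor_le (inv_nonneg.2 h0.le))

lemma exists_intInverses_mem_Icc_of_pos {u : ℝ} (h0 : 0 < u) (h1 : u ≤ 1) :
    ∃ a ∈ intInverses, ∃ b ∈ intInverses, u ∈ Icc a b ∧ |a - b| ≤ 2 * (a * b) := by
  obtain ⟨n, hn, hle, hge⟩ := exists_nat_inv_le_le h0 h1
  refine ⟨((n : ℝ) + 1)⁻¹, by exact_mod_cast nat_inv_mem_intInverses (n + 1), (n : ℝ)⁻¹,
    nat_inv_mem_intInverses n, ⟨hle, hge⟩, ?_⟩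
  have hdiff : (n : ℝ)⁻¹ - ((n : ℝ) + 1)⁻¹ = ((n : ℝ) + 1)⁻¹ * (n : ℝ)⁻¹ := by
    field_simp; ring
  have hprod : 0 ≤ ((n : ℝ) + 1)⁻¹ * (n : ℝ)⁻¹ := by positivity
  rw [abs_sub_comm, hdiff, abs_of_nonneg hprod]
  linarith

lemma exists_intInverses_mem_Icc {u : ℝ} (hu : u ∈ Icc (-1) 1) :
    ∃ a ∈ intInverses, ∃ b ∈ intInverses, u ∈ Icc a b ∧ |a - b| ≤ 2 * (a * b) := by
  rcases lt_trichotomy u 0 with hneg | rfl | hpos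
  · obtain ⟨a, ha, b, hb, hab, hdiff⟩ :=
      exists_intInverses_mem_Icc_of_pos (neg_pos.2 hneg) (neg_le.1 hu.1)
    refine ⟨-b, neg_mem_intInverses hb, -a, neg_mem_intInverses ha,
      ⟨neg_le.1 hab.2, le_neg.1 hab.1⟩, ?_⟩
    rwa [neg_sub_neg, neg_mul_neg, mul_comm b a]
  · have hzero : (0 : ℝ) ∈ intInverses := by simpa using nat_inv_mem_intInverses 0
    exact ⟨0, hzero, 0, hzero, by simp⟩
  · exact exists_intInverses_mem_Icc_of_pos hpos hu.2

lemma half_le_rollingFunction_intInverses :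
    1 / 2 ≤ rollingFunction (parabolaHull intInverses) (parabolaPoint 0) := by
  have hone : (1 : ℝ) ∈ intInverses := by simpa using nat_inv_mem_intInverses 1
  exact half_le_rollingFunction_parabolaPoint_zero isBounded_intInverses
    (closedBall_subset_parabolaHull (neg_mem_intInverses hone) hone fun _ =>
      exists_intInverses_mem_Icc)

lemma rollingFunction_parabolaPoint_nat_inv {n : ℕ} (hn : n ≠ 0) :
    rollingFunction (parabolaHull intInverses) (parabolaPoint (n : ℝ)⁻¹) = 0 :=
  rollingFunction_parabolaPoint_of_isolated (nat_inv_mem_intInverses n) (by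
    simpa using eventually_eq_int_inv (Int.natCast_ne_zero.2 hn))

lemma tendsto_parabolaPoint_nat_inv :
    Tendsto (fun n : ℕ => parabolaPoint (n : ℝ)⁻¹) atTop
      (𝓝[frontier (parabolaHull intInverses)] parabolaPoint 0) :=
  tendsto_nhdsWithin_iff.2
    ⟨(continuous_parabolaPoint.tendsto 0).comp tendsto_inv_atTop_nhds_zero_nat,
      .of_forall fun n => parabolaPoint_mem_frontier (nat_inv_mem_intInverses n)⟩

lemma not_continuousWithinAt_rollingFunction_intInverses :
    ¬ ContinuousWithinAt (rollingFunction (parabolaHull intInverses))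
      (frontier (parabolaHull intInverses)) (parabolaPoint 0) := by
  intro hcont
  have hlim := hcont.tendsto.comp tendsto_parabolaPoint_nat_inv
  have hzero : ∀ᶠ n : ℕ in atTop,
      rollingFunction (parabolaHull intInverses) (parabolaPoint (n : ℝ)⁻¹) = 0 :=
    (eventually_ne_atTop 0).mono fun _ => rollingFunction_parabolaPoint_nat_inv
  have heq := tendsto_nhds_unique hlim (tendsto_const_nhds.congr' (hzero.mono fun _ h => h.symm))
  linarith [half_le_rollingFunction_intInverses]

lemma pt_one_div_one_div_sq (x : ℝ) : pt (1 / x) (1 / x ^ 2) = parabolaPoint x⁻¹ := by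
  rw [parabolaPoint, one_div, one_div, inv_pow]

lemma pt_neg_one_div_one_div_sq (x : ℝ) : pt (-(1 / x)) (1 / x ^ 2) = parabolaPoint (-x)⁻¹ := by
  rw [← pt_one_div_one_div_sq, neg_sq, one_div_neg_eq_neg_one_div]

lemma pt_zero_zero : pt 0 0 = parabolaPoint 0 := by
  rw [parabolaPoint, zero_pow two_ne_zero]

lemma image_parabolaPoint_intInverses :
    parabolaPoint '' intInverses = {v | v = pt 0 0 ∨ ∃ n : ℕ, 1 ≤ n ∧
      (v = pt (1 / (n : ℝ)) (1 / (n : ℝ) ^ 2) ∨ v = pt (-(1 / (n : ℝ))) (1 / (n : ℝ) ^ 2))} := by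
  simp only [pt_one_div_one_div_sq, pt_neg_one_div_one_div_sq, pt_zero_zero]
  apply Subset.antisymm
  · rintro _ ⟨_, ⟨k, rfl⟩, rfl⟩
    obtain ⟨n, hn⟩ := k.eq_nat_or_neg
    rcases n.eq_zero_or_pos with rfl | hpos
    · left; rcases hn with rfl | rfl <;> simp
    · exact Or.inr ⟨n, hpos, hn.imp (by rintro rfl; simp) (by rintro rfl; simp)⟩
  · rintro _ (rfl | ⟨n, -, rfl | rfl⟩)
    · exact ⟨0, ⟨0, by simp⟩, rfl⟩
    · exact ⟨_, nat_inv_mem_intInverses n, rfl⟩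
    · exact ⟨_, ⟨-n, by simp⟩, rfl⟩

end IntInverses

/-- For the convex hull of `{(0,0)} ∪ {(±1/n, 1/n²) : n ≥ 1}`, the rolling function
vanishes at every point `(1/n, 1/n²)` but is at least `1/2` at `(0,0)`; in particular
it is not continuous at `(0,0)`. -/
theorem rollingFunction_not_continuous_example
    (K : Set (EuclideanSpace ℝ (Fin 2)))
    (hK : K = convexHull ℝ {v | v = pt 0 0 ∨ ∃ n : ℕ, 1 ≤ n ∧
      (v = pt (1 / (n : ℝ)) (1 / (n : ℝ) ^ 2) ∨ v = pt (-(1 / (n : ℝ))) (1 / (n : ℝ) ^ 2))}) :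
    (∀ n : ℕ, 1 ≤ n →
      pt (1 / (n : ℝ)) (1 / (n : ℝ) ^ 2) ∈ frontier K ∧
      rollingFunction K (pt (1 / (n : ℝ)) (1 / (n : ℝ) ^ 2)) = 0) ∧
    pt 0 0 ∈ frontier K ∧
    1 / 2 ≤ rollingFunction K (pt 0 0) ∧
    ¬ ContinuousWithinAt (rollingFunction K) (frontier K) (pt 0 0) := by
  rw [← image_parabolaPoint_intInverses, ← parabolaHull] at hK
  subst hK
  simp only [pt_one_div_one_div_sq, pt_zero_zero]
  exact ⟨fun n hn => ⟨parabolaPoint_mem_frontier (nat_inv_mem_intInverses n),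
    rollingFunction_parabolaPoint_nat_inv (Nat.one_le_iff_ne_zero.1 hn)⟩,
    parabolaPoint_mem_frontier ⟨0, by simp⟩, half_le_rollingFunction_intInverses,
    not_continuousWithinAt_rollingFunction_intInverses⟩
end

section
/- Let K be a convex body in ℝⁿ and suppose that for some r > 0 a Euclidean ball of radius r rolls freely in K. Then K has a unique outer unit normal at every boundary point: for every x ∈ ∂K there exists exactly one unit vector u with ⟨y − x, u⟩ ≤ 0 for all y ∈ K. -/
/-!
Let a ball with center `z` and radius `r` be contained in `K` and contain the boundary point `x`.
Then the only outer unit normal of `K` at `x` is `r⁻¹ • (x - z)`.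

It is one: if some `y ∈ K` had `0 < ⟪y - x, x - z⟫`, then moving from `x` a little in the direction
away from `y` would lead into the open ball, so `x` would lie strictly between an interior point of
`K` and the point `y` of `K`, hence in the interior of `K`.

It is the only one: testing an outer unit normal `u` against `z + r • u ∈ K` gives
`r ≤ ⟪x - z, u⟫`, while `‖x - z‖ ≤ r`. This is the equality case of the Cauchy–Schwarz inequality.
-/

open scoped InnerProductSpace

theorem dist_eq_of_mem_closedBall_of_notMem_interior {X : Type*} [PseudoMetricSpace X] {K : Set X}
    {r : ℝ} {x z : X} (hx : x ∉ interior K) (hxz : x ∈ Metric.closedBall z r)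
    (hzK : Metric.closedBall z r ⊆ K) : dist x z = r :=
  le_antisymm hxz <| not_lt.1 fun hlt =>
    hx (interior_mono hzK (Metric.ball_subset_interior_closedBall hlt))

section OuterUnitNormal

variable {E : Type*} [NormedAddCommGroup E] [InnerProductSpace ℝ E]
  {K : Set E} {r : ℝ} {u x y z : E}

/-- `u` is an outer unit normal of `K` at `x`. That `x` is a boundary point of `K` is not part of
the definition. -/
def IsOuterUnitNormal (K : Set E) (x u : E) : Prop :=
  ‖u‖ = 1 ∧ ∀ y ∈ K, ⟪y - x, u⟫_ℝ ≤ 0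

theorem exists_pos_norm_sub_smul_lt {a b : E} (hab : 0 < ⟪a, b⟫_ℝ) :
    ∃ t : ℝ, 0 < t ∧ ‖a - t • b‖ < ‖a‖ := by
  have hb : 0 < ‖b‖ := norm_pos_iff.2 fun h => by simp [h] at hab
  have ht : 0 < ⟪a, b⟫_ℝ / ‖b‖ ^ 2 := by positivity
  refine ⟨⟪a, b⟫_ℝ / ‖b‖ ^ 2, ht, lt_of_pow_lt_pow_left₀ 2 (norm_nonneg a) ?_⟩
  calc
    ‖a - (⟪a, b⟫_ℝ / ‖b‖ ^ 2) • b‖ ^ 2 = ‖a‖ ^ 2 - ⟪a, b⟫_ℝ / ‖b‖ ^ 2 * ⟪a, b⟫_ℝ := by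
      rw [norm_sub_sq_real, real_inner_smul_right, norm_smul, Real.norm_of_nonneg ht.le]
      field_simp
      ring
    _ < ‖a‖ ^ 2 := sub_lt_self _ (mul_pos ht hab)

theorem inner_sub_sub_center_nonpos (hK : Convex ℝ K) (hx : x ∉ interior K)
    (hball : Metric.ball z (dist x z) ⊆ K) (hy : y ∈ K) : ⟪y - x, x - z⟫_ℝ ≤ 0 := by
  rw [real_inner_comm]
  by_contra! hpos
  obtain ⟨t, ht, hlt⟩ := exists_pos_norm_sub_smul_lt hpos
  have hmem : x - t • (y - x) ∈ interior K := by
    apply interior_maximal hball Metric.isOpen_ball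
    rwa [Metric.mem_ball, dist_eq_norm, dist_eq_norm, sub_right_comm]
  have hseg : x ∈ openSegment ℝ (x - t • (y - x)) y := by
    refine ⟨1 / (1 + t), t / (1 + t), by positivity, by positivity, by field_simp, ?_⟩
    match_scalars <;> field_simp <;> ring
  exact hx (hK.openSegment_interior_self_subset_interior hmem hy hseg)

theorem isOuterUnitNormal_inv_smul_sub_center (hK : Convex ℝ K) (hr : 0 < r)
    (hx : x ∉ interior K) (hxz : x ∈ Metric.closedBall z r) (hzK : Metric.closedBall z r ⊆ K) :
    IsOuterUnitNormal K x (r⁻¹ • (x - z)) := by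
  have hdist : dist x z = r :=
    dist_eq_of_mem_closedBall_of_notMem_interior hx hxz hzK
  refine ⟨?_, fun y hy => ?_⟩
  · rw [norm_smul, ← dist_eq_norm, hdist, norm_inv, Real.norm_of_nonneg hr.le,
      inv_mul_cancel₀ hr.ne']
  · have hball : Metric.ball z (dist x z) ⊆ K :=
      hdist ▸ Metric.ball_subset_closedBall.trans hzK
    rw [real_inner_smul_right]
    exact mul_nonpos_of_nonneg_of_nonpos (inv_nonneg.2 hr.le)
      (inner_sub_sub_center_nonpos hK hx hball hy)

theorem IsOuterUnitNormal.sub_center_eq_smul (hu : IsOuterUnitNormal K x u)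
    (hxz : x ∈ Metric.closedBall z r) (hzK : Metric.closedBall z r ⊆ K) : x - z = r • u := by
  obtain ⟨hnorm, hnormal⟩ := hu
  have hle : ‖x - z‖ ≤ r := mem_closedBall_iff_norm.1 hxz
  have hr : 0 ≤ r := (norm_nonneg _).trans hle
  have hmem : z + r • u ∈ K := hzK (by simp [norm_smul, hnorm, abs_of_nonneg hr])
  have hinner : r ≤ ⟪x - z, u⟫_ℝ := by
    have htest := hnormal _ hmem
    rw [show z + r • u - x = r • u - (x - z) by abel, inner_sub_left, real_inner_smul_left,
      real_inner_self_eq_norm_sq, hnorm] at htest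
    linarith
  have hcs : ⟪x - z, u⟫_ℝ ≤ ‖x - z‖ := by simpa [hnorm] using real_inner_le_norm (x - z) u
  have heq : ‖x - z‖ = r := le_antisymm hle (hinner.trans hcs)
  have hcs_eq : ⟪x - z, u⟫_ℝ = ‖x - z‖ * ‖u‖ := by
    rw [hnorm, mul_one, heq]
    exact le_antisymm (hcs.trans hle) hinner
  simpa [hnorm, heq] using inner_eq_norm_mul_iff_real.1 hcs_eq

theorem isOuterUnitNormal_iff_eq_inv_smul_sub_center (hK : Convex ℝ K) (hr : 0 < r)
    (hx : x ∉ interior K) (hxz : x ∈ Metric.closedBall z r) (hzK : Metric.closedBall z r ⊆ K) :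
    IsOuterUnitNormal K x u ↔ u = r⁻¹ • (x - z) := by
  refine ⟨fun hu => ?_, ?_⟩
  · rw [hu.sub_center_eq_smul hxz hzK, inv_smul_smul₀ hr.ne']
  · rintro rfl
    exact isOuterUnitNormal_inv_smul_sub_center hK hr hx hxz hzK

theorem unique_normal_of_ball_rolls_freely_general (hK : Convex ℝ K) (hr : 0 < r)
    (hx : x ∉ interior K) (hxz : x ∈ Metric.closedBall z r) (hzK : Metric.closedBall z r ⊆ K) :
    ∃! u : E, IsOuterUnitNormal K x u := by
  simp only [isOuterUnitNormal_iff_eq_inv_smul_sub_center hK hr hx hxz hzK, existsUnique_eq]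

end OuterUnitNormal

/-- If a Euclidean ball of radius `r > 0` rolls freely in a convex body `K`, then `K`
has a unique outer unit normal at every boundary point. -/
theorem unique_normal_of_ball_rolls_freely {n : ℕ}
    (K : Set (EuclideanSpace ℝ (Fin n))) (hKcomp : IsCompact K) (hKconv : Convex ℝ K)
    (hKint : (interior K).Nonempty)
    (r : ℝ) (hr : 0 < r)
    (hroll : ∀ x ∈ frontier K, ∃ z : EuclideanSpace ℝ (Fin n),
      x ∈ Metric.closedBall z r ∧ Metric.closedBall z r ⊆ K) :
    ∀ x ∈ frontier K, ∃! u : EuclideanSpace ℝ (Fin n),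
      ‖u‖ = 1 ∧ ∀ y ∈ K, ⟪y - x, u⟫_ℝ ≤ 0 := by
  intro x hx
  obtain ⟨z, hxz, hzK⟩ := hroll x hx
  exact unique_normal_of_ball_rolls_freely_general hKconv hr hx.2 hxz hzK
end

section
/- Let K be a convex body in ℝⁿ and suppose that for some r > 0 a Euclidean ball of radius r rolls freely in K. Then K is the r-outer parallel body of a convex body: there exists a compact convex set C with K = C + r·B₂ⁿ, where B₂ⁿ is the closed Euclidean unit ball and + denotes Minkowski addition. -/
open scoped Pointwise

/-!
Let `C` be the set of translations moving `B` into `K`, so that `C + B ⊆ K`. Rolling freely says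
exactly that `C + B` contains the frontier of `K`; in particular `K` is closed. Given a point `x` of
`K ≠ E`, choose a frontier point `y` of `K` and follow the ray from `y` through `x`. Either it meets
the frontier again beyond `x`, and `x ∈ C + B` because `C + B` is convex, or its direction `x - y`
is a recession direction of `K`, hence of `C`, and `x = (x - y) + y ∈ C + B`.
-/

open Filter

section MinkowskiDiff

/-- The Minkowski difference (erosion) of `K` by `B`: the translation vectors that move `B` into
`K`. For `B` the ball of radius `r` about the origin this is the inner parallel body of `K` at
distance `r`. -/
def minkowskiDiff {E : Type*} [Add E] (K B : Set E) : Set E := {z | z +ᵥ B ⊆ K}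

section Add

variable {E : Type*} [Add E] {K B : Set E}

lemma mem_minkowskiDiff {z : E} : z ∈ minkowskiDiff K B ↔ ∀ b ∈ B, z + b ∈ K :=
  Set.vadd_set_subset_iff

lemma minkowskiDiff_eq_biInter : minkowskiDiff K B = ⋂ b ∈ B, (· + b) ⁻¹' K := by
  ext z
  simp only [mem_minkowskiDiff, Set.mem_iInter, Set.mem_preimage]

lemma minkowskiDiff_univ_left : minkowskiDiff Set.univ B = Set.univ :=
  Set.eq_univ_of_forall fun _ ↦ Set.subset_univ _

lemma minkowskiDiff_add_subset : minkowskiDiff K B + B ⊆ K :=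
  Set.add_subset_iff.2 fun _ hz ↦ mem_minkowskiDiff.1 hz

lemma isClosed_minkowskiDiff [TopologicalSpace E] [ContinuousAdd E] (hK : IsClosed K) :
    IsClosed (minkowskiDiff K B) := by
  rw [minkowskiDiff_eq_biInter]
  exact isClosed_biInter fun b _ ↦ hK.preimage (continuous_add_const b)

end Add

lemma isCompact_minkowskiDiff {E : Type*} [AddGroup E] [TopologicalSpace E] [ContinuousAdd E]
    {K B : Set E} (hK : IsCompact K) (hKclosed : IsClosed K) (hB : B.Nonempty) :
    IsCompact (minkowskiDiff K B) := by
  obtain ⟨b, hb⟩ := hB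
  exact ((Homeomorph.addRight b).isCompact_preimage.2 hK).of_isClosed_subset
    (isClosed_minkowskiDiff hKclosed) fun _ hz ↦ mem_minkowskiDiff.1 hz b hb

lemma convex_minkowskiDiff {𝕜 E : Type*} [Semiring 𝕜] [PartialOrder 𝕜] [AddCommGroup E]
    [Module 𝕜 E] {K B : Set E} (hK : Convex 𝕜 K) : Convex 𝕜 (minkowskiDiff K B) := by
  rw [minkowskiDiff_eq_biInter]
  exact convex_iInter₂ fun b _ ↦ hK.translate_preimage_left b

lemma add_mem_minkowskiDiff_of_mem_asymptoticCone {𝕜 E : Type*} [Field 𝕜] [LinearOrder 𝕜]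
    [IsStrictOrderedRing 𝕜] [TopologicalSpace 𝕜] [OrderTopology 𝕜] [AddCommGroup E] [Module 𝕜 E]
    [TopologicalSpace E] [IsTopologicalAddGroup E] [ContinuousSMul 𝕜 E] {K B : Set E}
    (hK : Convex 𝕜 K) (hKclosed : IsClosed K) {v z : E} (hv : v ∈ asymptoticCone 𝕜 K)
    (hz : z ∈ minkowskiDiff K B) : v + z ∈ minkowskiDiff K B := by
  refine mem_minkowskiDiff.2 fun b hb ↦ ?_
  simpa only [one_smul, vadd_eq_add, add_assoc] using
    hK.smul_vadd_mem_of_isClosed_of_mem_asymptoticCone hKclosed zero_le_one hv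
      (mem_minkowskiDiff.1 hz b hb)

end MinkowskiDiff

section Frontier

lemma inter_frontier_nonempty_of_isPreconnected {X : Type*} [TopologicalSpace X] {s t : Set X}
    (ht : IsPreconnected t) (hts : (t ∩ s).Nonempty) (hts' : (t ∩ sᶜ).Nonempty) :
    (t ∩ frontier s).Nonempty := by
  by_contra hfrontier
  have hcover : t ⊆ interior s ∪ (closure s)ᶜ := fun x hx ↦ by
    by_contra hxs
    rw [Set.mem_union, not_or, Set.notMem_compl_iff] at hxs
    exact hfrontier ⟨x, hx, hxs.2, hxs.1⟩
  have hinterior : (t ∩ interior s).Nonempty := hts.imp fun x ⟨hx, hxs⟩ ↦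
    ⟨hx, (hcover hx).resolve_right (Set.notMem_compl_iff.2 (subset_closure hxs))⟩
  have hexterior : (t ∩ (closure s)ᶜ).Nonempty := hts'.imp fun x ⟨hx, hxs⟩ ↦
    ⟨hx, (hcover hx).resolve_left fun hxi ↦ hxs (interior_subset hxi)⟩
  obtain ⟨x, -, hxi, hxe⟩ :=
    ht _ _ isOpen_interior isClosed_closure.isOpen_compl hcover hinterior hexterior
  exact hxe (interior_subset_closure hxi)

variable {E : Type*} [AddCommGroup E] [Module ℝ E] [TopologicalSpace E] [IsTopologicalAddGroup E]
  [ContinuousSMul ℝ E] {K : Set E}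

lemma exists_wbtw_mem_frontier {x y : E} (hx : x ∈ K) (hy : y ∉ K) :
    ∃ z ∈ frontier K, Wbtw ℝ x z y := by
  obtain ⟨z, hz, hzK⟩ := inter_frontier_nonempty_of_isPreconnected
    (convex_segment x y).isPreconnected ⟨x, left_mem_segment ℝ x y, hx⟩
    ⟨y, right_mem_segment ℝ x y, hy⟩
  exact ⟨z, hzK, mem_segment_iff_wbtw.1 hz⟩

lemma exists_nonneg_smul_add_notMem {x v : E} (hv : v ∉ asymptoticCone ℝ K) :
    ∃ t : ℝ, 0 ≤ t ∧ t • v + x ∉ K := by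
  have htendsto : Tendsto (fun t : ℝ ↦ t • v + x) atTop (AffineSpace.asymptoticNhds ℝ E v) :=
    (tendsto_id.atTop_smul_const_tendsto_asymptoticNhds v).asymptoticNhds_vadd_const x
  exact ((eventually_ge_atTop 0).and (htendsto.eventually (not_frequently.1 hv))).exists

lemma sub_mem_asymptoticCone_or_exists_wbtw_mem_frontier {x y : E} (hx : x ∈ K) :
    x - y ∈ asymptoticCone ℝ K ∨ ∃ z ∈ frontier K, Wbtw ℝ y x z := by
  refine or_iff_not_imp_left.2 fun hv ↦ ?_
  obtain ⟨t, ht, hp⟩ := exists_nonneg_smul_add_notMem (x := x) hv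
  obtain ⟨z, hzK, hz⟩ := exists_wbtw_mem_frontier hx hp
  have hyxp : Wbtw ℝ y x (t • (x - y) + x) := by
    rw [wbtw_iff_sameRay_vsub, vsub_eq_sub, vsub_eq_sub, add_sub_cancel_right]
    exact SameRay.sameRay_nonneg_smul_right _ ht
  exact ⟨z, hzK, hyxp.trans_right_left hz⟩

end Frontier

/-- `B` rolls freely in `K`: every frontier point of `K` is covered by a translate of `B` contained
in `K`. The radius is encoded in `B`; a ball of radius `r` is `B = r • closedBall 0 1`. -/
def RollsFreely {E : Type*} [Add E] [TopologicalSpace E] (B K : Set E) : Prop :=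
  ∀ x ∈ frontier K, ∃ z : E, x ∈ z +ᵥ B ∧ z +ᵥ B ⊆ K

namespace RollsFreely

section Add

variable {E : Type*} [Add E] [TopologicalSpace E] {K B : Set E}

lemma frontier_subset (h : RollsFreely B K) : frontier K ⊆ minkowskiDiff K B + B := by
  intro x hx
  obtain ⟨z, ⟨b, hb, hzb⟩, hzB⟩ := h x hx
  exact ⟨z, hzB, b, hb, hzb⟩

lemma isClosed (h : RollsFreely B K) : IsClosed K :=
  frontier_subset_iff_isClosed.1 (h.frontier_subset.trans minkowskiDiff_add_subset)

end Add

variable {E : Type*} [AddCommGroup E] [Module ℝ E] [TopologicalSpace E] [IsTopologicalAddGroup E]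
  [ContinuousSMul ℝ E] {K B : Set E}

theorem minkowskiDiff_add_eq (h : RollsFreely B K) (hK : Convex ℝ K) (hB : Convex ℝ B)
    (hBne : B.Nonempty) : minkowskiDiff K B + B = K := by
  refine minkowskiDiff_add_subset.antisymm fun x hx ↦ ?_
  obtain rfl | hKuniv := eq_or_ne K Set.univ
  · rw [minkowskiDiff_univ_left, Set.univ_add hBne]
    exact Set.mem_univ x
  obtain ⟨y, hy⟩ := nonempty_frontier_iff.2 ⟨⟨x, hx⟩, hKuniv⟩
  obtain hxy | ⟨z, hzK, hyxz⟩ := sub_mem_asymptoticCone_or_exists_wbtw_mem_frontier (y := y) hx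
  · obtain ⟨c, hc, b, hb, rfl⟩ := h.frontier_subset hy
    refine ⟨_, add_mem_minkowskiDiff_of_mem_asymptoticCone hK h.isClosed hxy hc, b, hb, ?_⟩
    simp only [add_assoc, sub_add_cancel]
  · exact ((convex_minkowskiDiff hK).add hB).mem_of_wbtw hyxz
      (h.frontier_subset hy) (h.frontier_subset hzK)

end RollsFreely

theorem outer_parallel_body_of_ball_rolls_freely_general {E : Type*} [AddCommGroup E]
    [TopologicalSpace E] [IsTopologicalAddGroup E] [Module ℝ E] [ContinuousSMul ℝ E] {K B : Set E}
    (hK : Convex ℝ K) (hB : Convex ℝ B) (hBne : B.Nonempty) (hroll : RollsFreely B K) :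
    ∃ C : Set E, IsClosed C ∧ (IsCompact K → IsCompact C) ∧ Convex ℝ C ∧ K = C + B :=
  ⟨minkowskiDiff K B, isClosed_minkowskiDiff hroll.isClosed,
    fun hKcomp ↦ isCompact_minkowskiDiff hKcomp hroll.isClosed hBne, convex_minkowskiDiff hK,
    (hroll.minkowskiDiff_add_eq hK hB hBne).symm⟩

/-- If a Euclidean ball of radius `r > 0` rolls freely in a convex body `K`, then `K` is
the `r`-outer parallel body of a compact convex set `C`, i.e. `K = C + r·B₂ⁿ`. -/
theorem outer_parallel_body_of_ball_rolls_freely {n : ℕ}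
    (K : Set (EuclideanSpace ℝ (Fin n))) (hKcomp : IsCompact K) (hKconv : Convex ℝ K)
    (hKint : (interior K).Nonempty)
    (r : ℝ) (hr : 0 < r)
    (hroll : ∀ x ∈ frontier K, ∃ z : EuclideanSpace ℝ (Fin n),
      x ∈ Metric.closedBall z r ∧ Metric.closedBall z r ⊆ K) :
    ∃ C : Set (EuclideanSpace ℝ (Fin n)), IsCompact C ∧ Convex ℝ C ∧
      K = C + r • Metric.closedBall (0 : EuclideanSpace ℝ (Fin n)) 1 := by
  obtain ⟨C, -, hCcomp, hCconv, hKC⟩ := outer_parallel_body_of_ball_rolls_freely_general hKconv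
    ((convex_closedBall 0 1).smul r) (Metric.nonempty_closedBall.2 zero_le_one).smul_set
    fun x hx ↦ by simpa only [affinity_unitClosedBall hr.le] using hroll x hx
  exact ⟨C, hCcomp hKcomp, hCconv, hKC⟩
end

section
/- Let n ≥ 2 and 1 < p < 2, and let B_p^n = {x ∈ ℝⁿ : Σ_{i=1}^n |x_i|^p ≤ 1}. Then no Euclidean ball rolls freely in B_p^n: for every r > 0 there exists x ∈ ∂B_p^n such that no closed Euclidean ball of radius r containing x is contained in B_p^n. -/
/-!
A ball of radius `r` in `B_p^n` through the vertex `e₀` lies in the half-space `x₀ ≤ 1`, so it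
touches the hyperplane `x₀ = 1` at `e₀` and has center `(1 - r) e₀`. It therefore contains
the points `(1 - t² / r) e₀ + t e₁` for small `t > 0`. There, since `p < 2`,
`∑ |xᵢ|^p = (1 - t² / r)^p + t^p ≥ (1 - t² / r)² + t^p ≥ 1 - 2 t² / r + t^p`, and as `t → 0` the
term `t^p` dominates `2 t² / r`, so the sum exceeds `1`.
-/

open Filter Topology Metric
open scoped RealInnerProductSpace

/-- A ball of radius `r` rolls freely in `K`: every boundary point of `K` lies in some closed
ball of radius `r` contained in `K`. -/
def BallRollsFreely {E : Type*} [PseudoMetricSpace E] (r : ℝ) (K : Set E) : Prop :=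
  ∀ x ∈ frontier K, ∃ z, x ∈ closedBall z r ∧ closedBall z r ⊆ K

/-- The unit ball of `ℓ_p` on the coordinates `ι`, as a subset of Euclidean space, so that the
balls rolling in it are the Euclidean ones. -/
def lpUnitBall (ι : Type*) [Fintype ι] (p : ℝ) : Set (EuclideanSpace ℝ ι) :=
  {x | ∑ i, |x i| ^ p ≤ 1}

section InnerProductSpace

variable {E : Type*} [NormedAddCommGroup E] [InnerProductSpace ℝ E] {u v x z : E} {a r : ℝ}

lemma center_eq_sub_smul_of_forall_inner_le (hr : 0 ≤ r) (hu : ‖u‖ = 1)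
    (hx : x ∈ closedBall z r) (hsupp : ∀ y ∈ closedBall z r, ⟪u, y⟫ ≤ ⟪u, x⟫) :
    z = x - r • u := by
  have hinner : ⟪z - x, u⟫ ≤ -r := by
    have htop := hsupp (z + r • u) (by simp [norm_smul, hu, abs_of_nonneg hr])
    rw [inner_add_right, real_inner_smul_right, real_inner_self_eq_norm_sq, hu] at htop
    rw [inner_sub_left, real_inner_comm, real_inner_comm u x]
    linarith
  have hdist : ‖z - x‖ ^ 2 ≤ r ^ 2 := by
    gcongr
    rwa [← dist_eq_norm, dist_comm]
  have hsq : ‖z - x + r • u‖ ^ 2 ≤ 0 := by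
    rw [norm_add_sq_real, real_inner_smul_right, norm_smul, hu, Real.norm_of_nonneg hr]
    nlinarith
  have hzero : z - x + r • u = 0 := by simpa using hsq.antisymm (by positivity)
  rw [← sub_eq_zero, ← hzero]
  abel

lemma sub_smul_add_mem_closedBall (hr : 0 ≤ r) (hu : ‖u‖ = 1) (huv : ⟪u, v⟫ = 0)
    (hav : a ^ 2 + ‖v‖ ^ 2 ≤ 2 * a * r) :
    x - a • u + v ∈ closedBall (x - r • u) r := by
  have hdiff : x - a • u + v - (x - r • u) = (r - a) • u + v := by module
  rw [mem_closedBall, dist_eq_norm, hdiff]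
  refine le_of_sq_le_sq ?_ hr
  rw [norm_add_sq_real, real_inner_smul_left, huv, norm_smul, hu, mul_one, Real.norm_eq_abs,
    sq_abs]
  linarith

end InnerProductSpace

lemma eventually_one_lt_abs_one_sub_sq_div_rpow_add_abs_rpow {p r : ℝ} (hp : p < 2)
    (hr : 0 < r) : ∀ᶠ t in 𝓝[>] (0 : ℝ), 1 < |1 - t ^ 2 / r| ^ p + |t| ^ p := by
  have hpow : Tendsto (fun t : ℝ ↦ t ^ (2 - p)) (𝓝[>] 0) (𝓝 0) := by
    have := (Real.continuousAt_rpow_const 0 (2 - p) (.inr (by linarith))).tendsto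
    rw [Real.zero_rpow (by linarith)] at this
    exact this.mono_left nhdsWithin_le_nhds
  filter_upwards [hpow.eventually_lt_const (half_pos hr), self_mem_nhdsWithin,
    Ioo_mem_nhdsGT (Real.sqrt_pos.2 hr)] with t htp (ht : 0 < t) ⟨_, htr⟩
  have hlt_one : t ^ 2 / r < 1 := (div_lt_one hr).2 ((Real.lt_sqrt ht.le).1 htr)
  have hbase : 1 - 2 * (t ^ 2 / r) ≤ (1 - t ^ 2 / r) ^ p :=
    calc 1 - 2 * (t ^ 2 / r) ≤ (1 - t ^ 2 / r) ^ (2 : ℝ) := by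
          rw [Real.rpow_two]
          nlinarith [sq_nonneg (t ^ 2 / r)]
      _ ≤ (1 - t ^ 2 / r) ^ p :=
          Real.rpow_le_rpow_of_exponent_ge (sub_pos.2 hlt_one)
            (sub_le_self 1 (by positivity)) hp.le
  have hdom : 2 * (t ^ 2 / r) < t ^ p :=
    calc 2 * (t ^ 2 / r) = t ^ p * t ^ (2 - p) * (2 / r) := by
          rw [← Real.rpow_add ht, add_sub_cancel, Real.rpow_two]
          ring
      _ < t ^ p * (r / 2) * (2 / r) := by gcongr
      _ = t ^ p := by field_simp
  rw [abs_of_pos (sub_pos.2 hlt_one), abs_of_pos ht]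
  linarith

section LpUnitBall

variable {ι : Type*} [Fintype ι] {p r : ℝ} {x z : EuclideanSpace ℝ ι} {i j : ι}

lemma le_one_of_mem_lpUnitBall (hp : 0 < p) (hx : x ∈ lpUnitBall ι p) (i : ι) : x i ≤ 1 := by
  have hterm : |x i| ^ p ≤ 1 :=
    (Finset.single_le_sum (f := fun k ↦ |x k| ^ p) (fun _ _ ↦ by positivity)
      (Finset.mem_univ i)).trans hx
  exact (le_abs_self _).trans (not_lt.1 fun h ↦ hterm.not_gt (Real.one_lt_rpow h hp))

lemma abs_rpow_add_abs_rpow_le_one_of_mem_lpUnitBall (hx : x ∈ lpUnitBall ι p) (hij : i ≠ j) :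
    |x i| ^ p + |x j| ^ p ≤ 1 :=
  (Finset.add_le_sum (f := fun k ↦ |x k| ^ p) (fun _ _ ↦ by positivity)
    (Finset.mem_univ i) (Finset.mem_univ j) hij).trans hx

variable [DecidableEq ι]

lemma single_mem_frontier_lpUnitBall (hp : 0 < p) (i : ι) :
    EuclideanSpace.single i 1 ∈ frontier (lpUnitBall ι p) := by
  refine ⟨subset_closure ?_, fun hint ↦ ?_⟩
  · simp [lpUnitBall, apply_ite, hp.ne']
  · have hmaps : Set.MapsTo (fun x : EuclideanSpace ℝ ι ↦ x i) (lpUnitBall ι p) (Set.Iic 1) :=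
      fun _ hx ↦ le_one_of_mem_lpUnitBall hp hx i
    have hlt := (PiLp.isOpenMap_apply 2 (fun _ ↦ ℝ) i).mapsTo_interior hmaps hint
    simp at hlt

lemma center_eq_single_sub_smul_of_closedBall_subset_lpUnitBall (hp : 0 < p) (hr : 0 ≤ r)
    (hmem : EuclideanSpace.single i 1 ∈ closedBall z r) (hsub : closedBall z r ⊆ lpUnitBall ι p) :
    z = EuclideanSpace.single i 1 - r • EuclideanSpace.single i 1 := by
  refine center_eq_sub_smul_of_forall_inner_le hr (by simp) hmem fun y hy ↦ ?_
  simpa [EuclideanSpace.inner_single_left] using le_one_of_mem_lpUnitBall hp (hsub hy) i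

lemma not_closedBall_subset_lpUnitBall_of_single_mem [Nontrivial ι] (hp0 : 0 < p) (hp2 : p < 2)
    (hr : 0 < r) (hmem : EuclideanSpace.single i 1 ∈ closedBall z r) :
    ¬ closedBall z r ⊆ lpUnitBall ι p := by
  intro hsub
  obtain ⟨j, hji⟩ := exists_ne i
  obtain ⟨t, ht_out, ht0, htr⟩ :=
    ((eventually_one_lt_abs_one_sub_sq_div_rpow_add_abs_rpow hp2 hr).and
      (Ioo_mem_nhdsGT hr)).exists
  set e : ι → EuclideanSpace ℝ ι := fun k ↦ EuclideanSpace.single k 1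
  have hball : e i - (t ^ 2 / r) • e i + t • e j ∈ closedBall z r := by
    rw [center_eq_single_sub_smul_of_closedBall_subset_lpUnitBall hp0 hr.le hmem hsub]
    refine sub_smul_add_mem_closedBall hr.le (by simp)
      (by simp [e, EuclideanSpace.inner_single_left, hji.symm]) ?_
    calc (t ^ 2 / r) ^ 2 + ‖t • e j‖ ^ 2 = t ^ 2 * (t / r) ^ 2 + t ^ 2 := by
          simp only [e, norm_smul, PiLp.norm_single, norm_one, mul_one,
            Real.norm_eq_abs, sq_abs]
          ring
      _ ≤ t ^ 2 * 1 + t ^ 2 := by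
          gcongr
          exact pow_le_one₀ (by positivity) ((div_le_one hr).2 htr.le)
      _ = 2 * (t ^ 2 / r) * r := by field_simp; ring
  have hin := abs_rpow_add_abs_rpow_le_one_of_mem_lpUnitBall (hsub hball) hji.symm
  simp only [e, PiLp.add_apply, PiLp.sub_apply, PiLp.smul_apply, PiLp.single_apply, hji, hji.symm,
    if_true, if_false, smul_eq_mul, mul_one, mul_zero, add_zero, sub_zero, zero_add] at hin
  exact hin.not_gt ht_out

end LpUnitBall

theorem no_ball_rolls_freely_in_lp_ball_general {ι : Type*} [Fintype ι] [Nontrivial ι] {p r : ℝ}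
    (hp0 : 0 < p) (hp2 : p < 2) (hr : 0 < r) : ¬ BallRollsFreely r (lpUnitBall ι p) := by
  classical
  intro hroll
  obtain ⟨i⟩ : Nonempty ι := inferInstance
  obtain ⟨z, hmem, hsub⟩ := hroll _ (single_mem_frontier_lpUnitBall hp0 i)
  exact not_closedBall_subset_lpUnitBall_of_single_mem hp0 hp2 hr hmem hsub

/-- For `n ≥ 2` and `1 < p < 2`, no Euclidean ball rolls freely in the unit ball
`B_p^n` of `ℓ_p^n`. -/
theorem no_ball_rolls_freely_in_lp_ball {n : ℕ} (hn : 2 ≤ n)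
    (p : ℝ) (hp1 : 1 < p) (hp2 : p < 2)
    (B : Set (EuclideanSpace ℝ (Fin n)))
    (hB : B = {x : EuclideanSpace ℝ (Fin n) | ∑ i, |x i| ^ p ≤ 1}) :
    ∀ r : ℝ, 0 < r → ∃ x ∈ frontier B,
      ∀ z : EuclideanSpace ℝ (Fin n),
        x ∈ Metric.closedBall z r → ¬ Metric.closedBall z r ⊆ B := by
  intro r hr
  have : Nontrivial (Fin n) := Fin.nontrivial_iff_two_le.2 hn
  simpa [BallRollsFreely, lpUnitBall, hB] using
    no_ball_rolls_freely_in_lp_ball_general (ι := Fin n) (zero_lt_one.trans hp1) hp2 hr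
end
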